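/- Let Ω ⊂ {z ∈ ℂ : Re z > 0} be an open convex domain that contains the positive real axis {x + 0i : x > 0}, is symmetric with respect to it (z ∈ Ω iff conj(z) ∈ Ω), and is not the right half plane. Let u be a smooth Martin function on Ω. Then for every c > 0 and every z ∈ Ω with u(z) = c, the tangential second derivative is strictly negative: T(z)ᵀ H_u(z) T(z) < 0, where T(z) = (∂u/∂y(z), −∂u/∂x(z)) and H_u denotes the real Hessian matrix of u; that is, every superlevel set Γ_c = {u > c} is strictly convex. -/

import Mathlib

/-!
Let `f : Ω → {Re > 0}` be the conformal map that fixes `1`, commutes with conjugation and increases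
along the positive axis, and let `F` be its inverse. The proof has three ingredients.

*Uniqueness.* Up to a constant factor, `u` is `Re f` (`IsAxialMap.eq_mul_re`). Since `Ω` is not the
half-plane, its part to the left of any vertical line is bounded, so `u ∘ F` tends to zero at the
imaginary axis, locally uniformly. Transplanted to the disc, `u ∘ F` is a positive harmonic function
vanishing on the circle away from `1`, and Poisson's formula on circles of radius `r → 1` identifies
it with a multiple of the Poisson kernel at `1` (`eq_poisson_of_tendsto_zero`).

*Convexity.* For `u = a * Re f` the tangent vector is `T = -a i (conj (f'))`, so the Hessian form at
`T` equals `-a ^ 3 |f'| ^ 4 Re (f'' / f' ^ 2) = a ^ 3 |f'| ^ 4 Re (F'' / F')`, the last quotient being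
taken at `f z`. Its sign comes from a half-plane version of Study's theorem (`IsAxialMap.study`):
since `Ω` is convex, `w ↦ f ((F (w + i s) + F (w - i s)) / 2)` is a self-map of the half-plane, its
values on the axis grow at least like `(1 - ε) x`, and Julia's lemma gives that its real part is at
least `Re w`. Expanding to second order in `s` yields `Re (F'' / F') ≤ 0`. The same use of Julia's
lemma with a horizontal translation shows that `Re F' > 0`.

*Strictness.* If `Re (F'' / F')` vanished at one point, `F'' / F'` would be a purely imaginary
constant by the open mapping theorem. Since `F'` is positive on the axis this constant is zero, so
`F` is affine and `Ω` is the half-plane (`IsAxialMap.re_div_neg`).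

The Riemann mapping theorem is proved here for the domains at hand by Koebe's extremal argument
(`riemann_map`).
-/

open Set Metric Filter Topology Complex ComplexConjugate

/-! ### The right half-plane: Schwarz–Pick and Julia -/

/-- The open right half-plane. -/
def rhp : Set ℂ := {z : ℂ | 0 < z.re}

@[simp] lemma mem_rhp {z : ℂ} : z ∈ rhp ↔ 0 < z.re := Iff.rfl

lemma isOpen_rhp : IsOpen rhp := isOpen_lt continuous_const continuous_re

lemma convex_rhp : Convex ℝ rhp := convex_halfSpace_re_gt 0

lemma norm_add_conj_sq (p q : ℂ) :
    ‖p + conj q‖ ^ 2 = ‖p - q‖ ^ 2 + 4 * p.re * q.re := by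
  rw [Complex.sq_norm, Complex.sq_norm, normSq_apply, normSq_apply]
  simp
  ring

lemma norm_sub_lt_norm_add_conj {p q : ℂ} (hp : 0 < p.re) (hq : 0 < q.re) :
    ‖p - q‖ < ‖p + conj q‖ := by
  have h := norm_add_conj_sq p q
  have := mul_pos hp hq
  exact lt_of_pow_lt_pow_left₀ 2 (norm_nonneg _) (by nlinarith)

lemma add_conj_ne_zero {p q : ℂ} (hp : 0 < p.re) (hq : 0 < q.re) : p + conj q ≠ 0 := by
  intro h
  have := congrArg re h
  simp at this
  linarith

lemma one_sub_ne_zero_of_mem_ball {ζ : ℂ} (h : ζ ∈ ball (0 : ℂ) 1) : 1 - ζ ≠ 0 := by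
  intro h0
  have : ζ = 1 := (sub_eq_zero.1 h0).symm
  simp [this] at h

lemma re_cayley (ζ : ℂ) : ((1 + ζ) / (1 - ζ)).re = (1 - ‖ζ‖ ^ 2) / ‖1 - ζ‖ ^ 2 := by
  rw [Complex.div_re, Complex.sq_norm, Complex.sq_norm, normSq_apply ζ, ← add_div]
  simp
  ring

lemma re_cayley_pos {ζ : ℂ} (h : ζ ∈ ball (0 : ℂ) 1) : 0 < ((1 + ζ) / (1 - ζ)).re := by
  rw [re_cayley]
  have h1 : ‖ζ‖ < 1 := by simpa using h
  have h2 := norm_pos_iff.2 (one_sub_ne_zero_of_mem_ball h)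
  have := norm_nonneg ζ
  apply div_pos <;> nlinarith

/-- The Schwarz–Pick inequality for holomorphic self-maps of the right half-plane. -/
lemma schwarz_pick_rhp {P : ℂ → ℂ} (hP : DifferentiableOn ℂ P rhp) (hm : MapsTo P rhp rhp)
    {w a : ℂ} (hw : w ∈ rhp) (ha : a ∈ rhp) :
    ‖P w - P a‖ * ‖w + conj a‖ ≤ ‖w - a‖ * ‖P w + conj (P a)‖ := by
  -- Cayley charts centred at `a` and at `P a` reduce the claim to the Schwarz lemma.
  set φ : ℂ → ℂ := fun ζ => a.im * I + a.re * ((1 + ζ) / (1 - ζ)) with hφ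
  have hφd : DifferentiableOn ℂ φ (ball 0 1) := by
    intro ζ hζ
    have := one_sub_ne_zero_of_mem_ball hζ
    apply DifferentiableAt.differentiableWithinAt
    fun_prop (disch := assumption)
  have hφm : MapsTo φ (ball 0 1) rhp := by
    intro ζ hζ
    have h := re_cayley_pos hζ
    have : (φ ζ).re = a.re * ((1 + ζ) / (1 - ζ)).re := by
      simp only [hφ, add_re, re_ofReal_mul, I_re, mul_zero, zero_add]
    rw [mem_rhp, this]
    exact mul_pos ha h
  set g : ℂ → ℂ := fun ζ => (P (φ ζ) - P a) / (P (φ ζ) + conj (P a)) with hg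
  have hPa : 0 < (P a).re := hm ha
  have hgd : DifferentiableOn ℂ g (ball 0 1) := by
    have h1 : DifferentiableOn ℂ (fun ζ => P (φ ζ)) (ball 0 1) := hP.comp hφd hφm
    exact (h1.sub_const _).div (h1.add_const _)
      fun ζ hζ => add_conj_ne_zero (hm (hφm hζ)) hPa
  have hgm : MapsTo g (ball 0 1) (closedBall 0 1) := by
    intro ζ hζ
    rw [mem_closedBall_zero_iff, hg]
    simp only [norm_div]
    exact div_le_one_of_le₀ (norm_sub_lt_norm_add_conj (hm (hφm hζ)) hPa).le (norm_nonneg _)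
  have hg0 : g 0 = 0 := by
    have : φ 0 = a := by
      simp only [hφ, add_zero, sub_zero, div_one, mul_one]
      rw [add_comm]
      exact re_add_im a
    simp [hg, this]
  have hwa := add_conj_ne_zero hw ha
  set ζ : ℂ := (w - a) / (w + conj a) with hζ
  have hζ1 : ‖ζ‖ < 1 := by
    rw [hζ, norm_div, div_lt_one (norm_pos_iff.2 hwa)]
    exact norm_sub_lt_norm_add_conj hw ha
  have hφζ : φ ζ = w := by
    have h1 : (1 - ζ) ≠ 0 := one_sub_ne_zero_of_mem_ball (by simpa using hζ1)
    have hre : (a.re : ℂ) = (a + conj a) / 2 := by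
      rw [Complex.add_conj]; push_cast; ring
    have him : (a.im : ℂ) * I = (a - conj a) / 2 := by
      rw [Complex.sub_conj]; push_cast; ring
    have e1 : 1 - ζ = (a + conj a) / (w + conj a) := by rw [hζ]; field_simp; ring
    have e2 : 1 + ζ = (2 * w - a + conj a) / (w + conj a) := by rw [hζ]; field_simp; ring
    have h2 : a + conj a ≠ 0 := add_conj_ne_zero ha ha
    simp only [hφ]
    rw [hre, him, e1, e2]
    field_simp
    ring
  have key := Complex.norm_le_norm_of_mapsTo_ball hgd hgm hg0 hζ1
  rw [hg] at key
  simp only [hφζ] at key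
  rw [hζ, norm_div, norm_div] at key
  rwa [div_le_div_iff₀ (norm_pos_iff.2 (add_conj_ne_zero (hm hw) hPa)) (norm_pos_iff.2 hwa)] at key

/-- A form of the Julia–Wolff lemma at infinity: a holomorphic self-map of the half-plane whose
real part grows at least like `c * x` along the real axis expands real parts by the factor `c`. -/
lemma julia_rhp {h : ℂ → ℂ} (hh : DifferentiableOn ℂ h rhp) (hm : MapsTo h rhp rhp) {c : ℝ}
    (hc : ∀ᶠ x : ℝ in atTop, c * x ≤ (h x).re) {w : ℂ} (hw : w ∈ rhp) :
    c * w.re ≤ (h w).re := by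
  have hw0 : 0 < w.re := hw
  set r := (h w).re with hr
  have hr0 : 0 < r := hm hw
  have key : ∀ᶠ x : ℝ in atTop, (c * w.re - r) * x ^ 2 ≤ r * ‖w‖ ^ 2 := by
    filter_upwards [hc, eventually_gt_atTop 0] with x hx hx0
    have hxm : (x : ℂ) ∈ rhp := by simpa using hx0
    have sp := schwarz_pick_rhp hh hm hw hxm
    have sp2 := pow_le_pow_left₀ (by positivity) sp 2
    rw [mul_pow, mul_pow, norm_add_conj_sq, norm_add_conj_sq] at sp2
    set R := (h x).re with hR
    have hR0 : 0 < R := hm hxm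
    have hB : ‖w - x‖ ^ 2 = x ^ 2 - 2 * w.re * x + ‖w‖ ^ 2 := by
      rw [Complex.sq_norm, Complex.sq_norm, normSq_apply, normSq_apply]; simp; ring
    have hA : (R - r) ^ 2 ≤ ‖h w - h x‖ ^ 2 := by
      rw [Complex.sq_norm, normSq_apply, sub_re]
      nlinarith [mul_self_nonneg (h w - h x).im]
    simp only [ofReal_re] at sp2
    have hwx := mul_pos hw0 hx0
    have h1 : ‖h w - h x‖ ^ 2 * (w.re * x) ≤ ‖w - x‖ ^ 2 * (r * R) := by nlinarith
    have h2 : (R - r) ^ 2 * (w.re * x) ≤ ‖w - x‖ ^ 2 * (r * R) :=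
      (mul_le_mul_of_nonneg_right hA hwx.le).trans h1
    have h3 : R * ((R - 2 * r) * (w.re * x)) ≤ R * (‖w - x‖ ^ 2 * r) := by
      nlinarith [mul_nonneg (sq_nonneg r) hwx.le]
    have h4 := le_of_mul_le_mul_left h3 hR0
    rw [hB] at h4
    have h5 : (c * x - 2 * r) * (w.re * x) ≤ (R - 2 * r) * (w.re * x) :=
      mul_le_mul_of_nonneg_right (by linarith) hwx.le
    nlinarith
  by_contra! hlt
  have : Tendsto (fun x : ℝ => (c * w.re - r) * x ^ 2) atTop atTop :=
    (tendsto_pow_atTop two_ne_zero).const_mul_atTop (by linarith)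
  obtain ⟨x, h1, h2⟩ := (key.and (this.eventually_gt_atTop (r * ‖w‖ ^ 2))).exists
  linarith

/-- A holomorphic function with nonnegative real part whose real part vanishes somewhere is
constant, by the open mapping theorem. -/
lemma eqOn_const_of_re_nonneg {L : ℂ → ℂ} {U : Set ℂ} (hU : IsOpen U) (hUc : IsPreconnected U)
    (hL : DifferentiableOn ℂ L U) (h0 : ∀ z ∈ U, 0 ≤ (L z).re) {a : ℂ} (ha : a ∈ U)
    (hLa : (L a).re = 0) : ∀ z ∈ U, L z = L a := by
  rcases (hL.analyticOnNhd hU).is_constant_or_isOpen hUc with ⟨w, hw⟩ | ho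
  · intro z hz; rw [hw z hz, hw a ha]
  · exfalso
    have h1 := ho U subset_rfl hU
    obtain ⟨ε, hε, hb⟩ := Metric.isOpen_iff.1 h1 (L a) (mem_image_of_mem _ ha)
    have : L a - (ε / 2 : ℝ) ∈ ball (L a) ε := by
      simp [abs_of_pos hε, hε]
    obtain ⟨z, hz, hzL⟩ := hb this
    have h2 := h0 z hz
    rw [hzL, sub_re, hLa, ofReal_re] at h2
    linarith

/-! ### Normal families and the extremal problem -/

/-- Hurwitz's theorem: a locally uniform limit of zero-free holomorphic functions on a connected
open set is zero-free unless it vanishes identically. -/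
lemma hurwitz {ι : Type*} {l : Filter ι} [l.NeBot] {U : Set ℂ} (hU : IsOpen U)
    (hUc : IsPreconnected U) {g : ι → ℂ → ℂ} {G : ℂ → ℂ}
    (hlim : TendstoLocallyUniformlyOn g G l U)
    (hd : ∀ n, DifferentiableOn ℂ (g n) U) (h0 : ∀ n, ∀ z ∈ U, g n z ≠ 0)
    {b : ℂ} (hb : b ∈ U) (hGb : G b ≠ 0) : ∀ z ∈ U, G z ≠ 0 := by
  intro a ha hGa
  have hG : DifferentiableOn ℂ G U := hlim.differentiableOn (Eventually.of_forall hd) hU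
  have hGan := hG.analyticOnNhd hU
  rcases (hGan a ha).eventually_eq_zero_or_eventually_ne_zero with h | h
  · exact hGb (hGan.eqOn_zero_of_preconnected_of_eventuallyEq_zero hUc ha h hb)
  · rw [eventually_nhdsWithin_iff] at h
    obtain ⟨r, hr, hball⟩ := Metric.nhds_basis_closedBall.mem_iff.1 (h.and (hU.mem_nhds ha))
    have hcU : closedBall a r ⊆ U := fun z hz => (hball hz).2
    have hsph : ∀ z ∈ sphere a r, G z ≠ 0 := by
      intro z hz
      refine (hball (sphere_subset_closedBall hz)).1 ?_
      rintro rfl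
      simp at hz
      exact hr.ne hz
    have hcont : ContinuousOn (fun z => ‖G z‖) (sphere a r) :=
      (hG.continuousOn.mono (sphere_subset_closedBall.trans hcU)).norm
    obtain ⟨y, hy, hmin⟩ := (isCompact_sphere a r).exists_isMinOn
      (NormedSpace.sphere_nonempty.2 hr.le) hcont
    set m := ‖G y‖ with hm
    have hm0 : 0 < m := norm_pos_iff.2 (hsph y hy)
    have hu := (tendstoLocallyUniformlyOn_iff_forall_isCompact hU).1 hlim _ hcU
      (isCompact_closedBall a r)
    obtain ⟨n, hn⟩ := (Metric.tendstoUniformlyOn_iff.1 hu (m / 3) (by positivity)).exists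
    -- the maximum principle for `1 / g n` contradicts `‖g n a‖ < m / 3`
    have hinv : DifferentiableOn ℂ (fun z => (g n z)⁻¹) (closedBall a r) :=
      ((hd n).mono hcU).inv fun z hz => h0 n z (hcU hz)
    have hbd : ∀ z ∈ frontier (ball a r), ‖(g n z)⁻¹‖ ≤ 3 / (2 * m) := by
      intro z hz
      rw [frontier_ball a hr.ne'] at hz
      have h1 := hn z (sphere_subset_closedBall hz)
      have h2 : m ≤ ‖G z‖ := hmin hz
      have h3 : ‖G z‖ - ‖g n z‖ ≤ dist (G z) (g n z) := by
        rw [dist_eq_norm]; exact norm_sub_norm_le _ _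
      have h4 : 2 * m / 3 ≤ ‖g n z‖ := by linarith
      rw [norm_inv, inv_le_comm₀ (by linarith) (by positivity)]
      have : (3 / (2 * m))⁻¹ = 2 * m / 3 := inv_div _ _
      rwa [this]
    have hmax := Complex.norm_le_of_forall_mem_frontier_norm_le isBounded_ball
      (DifferentiableOn.diffContOnCl (by rwa [closure_ball a hr.ne'])) hbd
      (subset_closure (mem_ball_self hr))
    have h1 := hn a (mem_closedBall_self hr.le)
    rw [hGa, dist_zero_left] at h1
    have h2 : 0 < ‖g n a‖ := norm_pos_iff.2 (h0 n a ha)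
    rw [norm_inv, inv_le_comm₀ h2 (by positivity)] at hmax
    have : (3 / (2 * m))⁻¹ = 2 * m / 3 := inv_div _ _
    linarith

/-- The normalised univalent maps of `U` into the unit disc, over which the derivative at `p` is
maximised in the proof of the Riemann mapping theorem. -/
structure IsRiemannCandidate (U : Set ℂ) (p : ℂ) (φ : ℂ → ℂ) : Prop where
  diff : DifferentiableOn ℂ φ U
  inj : InjOn φ U
  deriv_ne : ∀ z ∈ U, deriv φ z ≠ 0
  maps : MapsTo φ U (ball 0 1)
  zero : φ p = 0

/-- Schwarz's lemma gives a local Lipschitz bound that is uniform over maps into the disc. -/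
lemma dist_le_of_maps {a : ℂ} {r : ℝ} {φ : ℂ → ℂ}
    (hd : DifferentiableOn ℂ φ (ball a r)) (hm : MapsTo φ (ball a r) (ball 0 1))
    {z : ℂ} (hz : z ∈ ball a r) : dist (φ z) (φ a) ≤ 2 / r * dist z a := by
  have hr : 0 < r := pos_of_mem_ball hz
  refine Complex.dist_le_div_mul_dist_of_mapsTo_ball hd ?_ hz
  intro w hw
  have h1 := hm hw
  have h2 := hm (mem_ball_self hr)
  rw [mem_ball_zero_iff] at h1 h2
  rw [mem_closedBall, dist_eq_norm]
  exact (norm_sub_le _ _).trans (by linarith)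

/-- Montel's theorem, in the form that a sequence of maps into the unit disc converges locally
uniformly along an ultrafilter. -/
lemma montel {U : Set ℂ} (hU : IsOpen U) {φ : ℕ → ℂ → ℂ}
    (hd : ∀ n, DifferentiableOn ℂ (φ n) U) (hm : ∀ n, MapsTo (φ n) U (ball 0 1))
    (l : Ultrafilter ℕ) :
    ∃ G : ℂ → ℂ, TendstoLocallyUniformlyOn φ G l U ∧ ∀ z ∈ U, ‖G z‖ ≤ 1 := by
  have hex : ∀ z ∈ U, ∃ y ∈ closedBall (0 : ℂ) 1, Tendsto (fun n => φ n z) l (𝓝 y) := by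
    intro z hz
    refine (isCompact_closedBall (0 : ℂ) 1).ultrafilter_le_nhds (l.map fun n => φ n z) ?_
    rw [le_principal_iff, Ultrafilter.coe_map, mem_map]
    exact univ_mem' fun n => ball_subset_closedBall (hm n hz)
  choose! G hG1 hG2 using hex
  refine ⟨G, ?_, fun z hz => by simpa using hG1 z hz⟩
  rw [Metric.tendstoLocallyUniformlyOn_iff]
  intro ε hε a ha
  obtain ⟨r, hr, hball⟩ := Metric.isOpen_iff.1 hU a ha
  set δ := min r (r * ε / 8) with hδ
  have hδ0 : 0 < δ := by positivity
  have hlip : ∀ n, ∀ z ∈ ball a δ, dist (φ n z) (φ n a) ≤ ε / 4 := by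
    intro n z hz
    have hzr : z ∈ ball a r := ball_subset_ball (min_le_left _ _) hz
    refine (dist_le_of_maps ((hd n).mono hball) ((hm n).mono_left hball) hzr).trans ?_
    have : dist z a ≤ r * ε / 8 := (mem_ball.1 hz).le.trans (min_le_right _ _)
    calc 2 / r * dist z a ≤ 2 / r * (r * ε / 8) := by gcongr
      _ = ε / 4 := by field_simp; norm_num
  have hsub : ball a δ ⊆ U := (ball_subset_ball (min_le_left _ _)).trans hball
  refine ⟨ball a δ, mem_nhdsWithin_of_mem_nhds (ball_mem_nhds a hδ0), ?_⟩
  filter_upwards [Metric.tendsto_nhds.1 (hG2 a ha) (ε / 4) (by positivity)] with n hn z hz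
  have hGz : dist (G z) (G a) ≤ ε / 4 :=
    le_of_tendsto ((hG2 z (hsub hz)).dist (hG2 a ha))
      (Eventually.of_forall fun n => hlip n z hz)
  have h1 := dist_triangle4 (G z) (G a) (φ n a) (φ n z)
  have h2 := hlip n z hz
  rw [dist_comm] at hn h2
  linarith

/-- The extremal problem has a solution: a maximising sequence converges by `montel`, and its limit
is again a candidate by `hurwitz`. -/
lemma exists_extremal {U : Set ℂ} (hU : IsOpen U) (hUc : IsPreconnected U) {p : ℂ} (hp : p ∈ U)
    (hne : ∃ φ, IsRiemannCandidate U p φ) :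
    ∃ φ, IsRiemannCandidate U p φ ∧
      ∀ ψ, IsRiemannCandidate U p ψ → ‖deriv ψ p‖ ≤ ‖deriv φ p‖ := by
  set S : Set ℝ := {x | ∃ φ, IsRiemannCandidate U p φ ∧ x = ‖deriv φ p‖} with hS
  obtain ⟨φ₀, hφ₀⟩ := hne
  have hSne : S.Nonempty := ⟨_, φ₀, hφ₀, rfl⟩
  obtain ⟨r, hr, hball⟩ := Metric.isOpen_iff.1 hU p hp
  have hSb : BddAbove S := by
    refine ⟨2 / r, ?_⟩
    rintro x ⟨φ, hφ, rfl⟩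
    refine Complex.norm_deriv_le_div_of_mapsTo_ball (hφ.diff.mono hball) ?_ hr
    intro w hw
    have h1 := hφ.maps (hball hw)
    rw [mem_ball_zero_iff] at h1
    rw [hφ.zero, mem_closedBall_zero_iff]
    linarith
  obtain ⟨x, -, hx, hxS⟩ := exists_seq_tendsto_sSup hSne hSb
  choose φ hφ hxφ using hxS
  obtain ⟨G, hG, hG1⟩ := montel hU (fun n => (hφ n).diff) (fun n => (hφ n).maps) (hyperfilter ℕ)
  have hdG : DifferentiableOn ℂ G U :=
    hG.differentiableOn (Eventually.of_forall fun n => (hφ n).diff) hU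
  have hderiv := hG.deriv (Eventually.of_forall fun n => (hφ n).diff) hU
  have hle : (↑(hyperfilter ℕ) : Filter ℕ) ≤ atTop := by
    rw [← Nat.cofinite_eq_atTop]; exact hyperfilter_le_cofinite
  have hGp : ‖deriv G p‖ = sSup S := by
    refine tendsto_nhds_unique ((hderiv.tendsto_at hp).norm) ?_
    convert hx.mono_left hle using 1
    ext n
    exact (hxφ n).symm
  have hGp0 : deriv G p ≠ 0 := by
    have h1 : 0 < ‖deriv φ₀ p‖ := norm_pos_iff.2 (hφ₀.deriv_ne p hp)
    have h2 : ‖deriv φ₀ p‖ ≤ sSup S := le_csSup hSb ⟨φ₀, hφ₀, rfl⟩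
    rw [← norm_pos_iff, hGp]
    linarith
  have hnc : ∀ a ∈ U, ∃ b ∈ U, G b ≠ G a := by
    intro a _
    by_contra! h
    apply hGp0
    have : G =ᶠ[𝓝 p] fun _ => G a := by
      filter_upwards [hU.mem_nhds hp] with z hz using h z hz
    rw [this.deriv_eq]
    simp
  refine ⟨G, ⟨hdG, ?_, ?_, ?_, ?_⟩, ?_⟩
  · -- Hurwitz near `b` for the functions `φ n - φ n a`
    intro a ha b hb hab
    by_contra hne
    obtain ⟨r, hr, hball⟩ := Metric.isOpen_iff.1 (hU.sdiff (isClosed_singleton (x := a))) b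
      ⟨hb, fun h => hne h.symm⟩
    have hBU : ball b r ⊆ U := fun z hz => (hball hz).1
    have hlim : TendstoLocallyUniformlyOn (fun n z => φ n z - φ n a) (fun z => G z - G a)
        (hyperfilter ℕ) (ball b r) := by
      have h2 : TendstoLocallyUniformlyOn (fun n (_ : ℂ) => φ n a) (fun _ => G a)
          (hyperfilter ℕ) (ball b r) := by
        rw [Metric.tendstoLocallyUniformlyOn_iff]
        intro ε hε x _
        refine ⟨univ, univ_mem, ?_⟩
        filter_upwards [Metric.tendsto_nhds.1 (hG.tendsto_at ha) ε hε] with n hn y _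
        rwa [dist_comm]
      exact (hG.mono hBU).sub h2
    have hzero : ∀ z ∈ ball b r, G z = G a := by
      intro z hz
      by_contra hz'
      exact hurwitz isOpen_ball (convex_ball b r).isPreconnected hlim
        (fun n => ((hφ n).diff.mono hBU).sub_const _)
        (fun n w hw h => (hball hw).2 ((hφ n).inj (hBU hw) ha (sub_eq_zero.1 h)))
        hz (sub_ne_zero.2 hz') b (mem_ball_self hr) (by rw [hab, sub_self])
    obtain ⟨d, hd, hd'⟩ := hnc a ha
    refine hd' ?_
    exact (hdG.analyticOnNhd hU).eqOn_of_preconnected_of_eventuallyEq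
      analyticOnNhd_const hUc hb (by
        filter_upwards [ball_mem_nhds b hr] with z hz using hzero z hz) hd
  · exact hurwitz hU hUc hderiv (fun n => (hφ n).diff.deriv hU) (fun n => (hφ n).deriv_ne) hp hGp0
  · -- an interior value of modulus one would contradict the open mapping theorem
    rcases (hdG.analyticOnNhd hU).is_constant_or_isOpen hUc with ⟨w, hw⟩ | ho
    · obtain ⟨b, hb, hb'⟩ := hnc p hp
      exact absurd ((hw b hb).trans (hw p hp).symm) hb'
    · have h1 : G '' U ⊆ closedBall 0 1 := by
        rintro _ ⟨z, hz, rfl⟩; simpa using hG1 z hz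
      have h2 := (ho U subset_rfl hU).subset_interior_iff.2 h1
      rw [interior_closedBall _ one_ne_zero] at h2
      exact fun z hz => h2 ⟨z, hz, rfl⟩
  · have := hG.tendsto_at hp
    simp only [(hφ _).zero] at this
    exact tendsto_nhds_unique this tendsto_const_nhds
  · intro ψ hψ
    rw [hGp]
    exact le_csSup hSb ⟨ψ, hψ, rfl⟩

/-! ### The Riemann mapping theorem for convex domains -/

/-- The disc automorphism sending `b` to `0`. -/
noncomputable def mob (b z : ℂ) : ℂ := (z - b) / (1 - conj b * z)

lemma mob_den_ne {b z : ℂ} (hb : ‖b‖ < 1) (hz : ‖z‖ < 1) : 1 - conj b * z ≠ 0 := by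
  intro h
  have h1 : conj b * z = 1 := (sub_eq_zero.1 h).symm
  have h2 := congrArg norm h1
  rw [norm_mul, RCLike.norm_conj, norm_one] at h2
  nlinarith [norm_nonneg b, norm_nonneg z]

lemma norm_mob_lt {b z : ℂ} (hb : ‖b‖ < 1) (hz : ‖z‖ < 1) : ‖mob b z‖ < 1 := by
  have hd := norm_pos_iff.2 (mob_den_ne hb hz)
  rw [mob, norm_div, div_lt_one hd]
  refine lt_of_pow_lt_pow_left₀ 2 hd.le ?_
  have key : ‖1 - conj b * z‖ ^ 2 - ‖z - b‖ ^ 2 = (1 - ‖z‖ ^ 2) * (1 - ‖b‖ ^ 2) := by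
    simp only [Complex.sq_norm, normSq_apply]
    simp
    ring
  have h1 : 0 < 1 - ‖z‖ ^ 2 := by nlinarith [norm_nonneg z]
  have h2 : 0 < 1 - ‖b‖ ^ 2 := by nlinarith [norm_nonneg b]
  nlinarith [mul_pos h1 h2]

lemma one_sub_conj_mul_self_ne {b : ℂ} (hb : ‖b‖ < 1) : 1 - conj b * b ≠ 0 := mob_den_ne hb hb

lemma mob_injOn {b : ℂ} (hb : ‖b‖ < 1) : InjOn (mob b) (ball 0 1) := by
  intro z hz w hw h
  rw [mem_ball_zero_iff] at hz hw
  have h1 := mob_den_ne hb hz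
  have h2 := mob_den_ne hb hw
  have h3 := one_sub_conj_mul_self_ne hb
  rw [mob, mob, div_eq_div_iff h1 h2] at h
  have : (z - w) * (1 - conj b * b) = 0 := by linear_combination h
  rcases mul_eq_zero.1 this with h | h
  · exact sub_eq_zero.1 h
  · exact absurd h h3

lemma hasDerivAt_mob {b z : ℂ} (hb : ‖b‖ < 1) (hz : ‖z‖ < 1) :
    HasDerivAt (mob b) ((1 - conj b * b) / (1 - conj b * z) ^ 2) z := by
  have h1 := mob_den_ne hb hz
  have h := ((hasDerivAt_id z).sub_const b).fun_div
    (((hasDerivAt_id z).const_mul (conj b)).const_sub 1) h1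
  refine h.congr_deriv ?_
  simp only [id]
  field_simp
  ring

lemma isSimplyConnected_of_convex {U : Set ℂ} (hc : Convex ℝ U) (hne : U.Nonempty) :
    IsSimplyConnected U := by
  have := hc.contractibleSpace hne
  exact SimplyConnectedSpace.ofContractible U

lemma deriv_ne_of_leftInverse {φ g : ℂ → ℂ} {U : Set ℂ} (hU : IsOpen U) {z : ℂ} (hz : z ∈ U)
    (hg : DifferentiableAt ℂ g (φ z)) (hφ : DifferentiableAt ℂ φ z)
    (h : LeftInvOn g φ U) : deriv g (φ z) * deriv φ z = 1 := by
  rw [← deriv_comp z hg hφ]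
  have : g ∘ φ =ᶠ[𝓝 z] id := by
    filter_upwards [hU.mem_nhds hz] with w hw using h hw
  rw [this.deriv_eq, deriv_id]

/-- Koebe's square-root trick: a candidate omitting a value of the disc is not extremal. -/
lemma exists_larger {U : Set ℂ} (hU : IsOpen U) (hUc : Convex ℝ U) {p : ℂ} (hp : p ∈ U)
    {φ : ℂ → ℂ} (hφ : IsRiemannCandidate U p φ) {a : ℂ} (ha : ‖a‖ < 1) (hom : ∀ z ∈ U, φ z ≠ a) :
    ∃ ψ, IsRiemannCandidate U p ψ ∧ ‖deriv φ p‖ < ‖deriv ψ p‖ := by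
  have hn : ∀ z ∈ U, ‖φ z‖ < 1 := fun z hz => by simpa using hφ.maps hz
  have hφd : ∀ z ∈ U, HasDerivAt φ (deriv φ z) z := fun z hz =>
    (hφ.diff.differentiableAt (hU.mem_nhds hz)).hasDerivAt
  set m : ℂ → ℂ := fun z => mob a (φ z) with hm
  have hm1 : ∀ z ∈ U, ‖m z‖ < 1 := fun z hz => norm_mob_lt ha (hn z hz)
  have hm0 : ∀ z ∈ U, m z ≠ 0 := fun z hz =>
    div_ne_zero (sub_ne_zero.2 (hom z hz)) (mob_den_ne ha (hn z hz))
  have hmd : ∀ z ∈ U, HasDerivAt m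
      ((1 - conj a * a) / (1 - conj a * φ z) ^ 2 * deriv φ z) z := fun z hz =>
    (hasDerivAt_mob ha (hn z hz)).comp z (hφd z hz)
  have hmc : ContinuousOn m U := fun z hz => (hmd z hz).continuousAt.continuousWithinAt
  obtain ⟨q, hqc, hq⟩ := exists_continuousOn_pow_eq (isSimplyConnected_of_convex hUc ⟨p, hp⟩) hU hmc
    (by rintro ⟨z, hz, h⟩; exact hm0 z hz h) two_ne_zero
  have hq0 : ∀ z ∈ U, q z ≠ 0 := fun z hz h => hm0 z hz (by rw [← hq, h]; ring)
  have hq1 : ∀ z ∈ U, ‖q z‖ < 1 := by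
    intro z hz
    have := hm1 z hz
    rw [← hq, norm_pow] at this
    nlinarith [norm_nonneg (q z)]
  have hqd : ∀ z ∈ U, HasDerivAt q
      ((2 * q z)⁻¹ * ((1 - conj a * a) / (1 - conj a * φ z) ^ 2 * deriv φ z)) z := by
    intro z hz
    have hqan : DifferentiableAt ℂ q z := by
      -- near `z`, `q` is `m` followed by a local inverse of squaring
      have hs : HasStrictDerivAt (fun w : ℂ => w ^ 2) (2 * q z) (q z) := by
        simpa using hasStrictDerivAt_pow 2 (q z)
      have hne : (2 * q z) ≠ 0 := mul_ne_zero two_ne_zero (hq0 z hz)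
      have hinv := (hs.to_localInverse hne).hasDerivAt
      have hqz := hqc.continuousAt (hU.mem_nhds hz)
      have hev : q =ᶠ[𝓝 z] fun w => hs.localInverse _ _ _ hne (m w) := by
        have hl := hs.eventually_left_inverse hne
        filter_upwards [hqz.eventually hl] with w hw
        rw [← hq w]
        exact hw.symm
      rw [show q z ^ 2 = m z from hq z] at hinv
      exact ((hinv.comp z (hmd z hz)).differentiableAt).congr_of_eventuallyEq hev
    have h1 : HasDerivAt m (2 * q z * deriv q z) z := by
      have := (hqan.hasDerivAt.fun_pow 2)
      have he : (fun w => q w ^ 2) = m := funext hq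
      rw [he] at this
      simpa using this
    have h2 := h1.unique (hmd z hz)
    rw [← h2, ← mul_assoc, inv_mul_cancel₀ (mul_ne_zero two_ne_zero (hq0 z hz)), one_mul]
    exact hqan.hasDerivAt
  set s := q p with hs
  have hs1 : ‖s‖ < 1 := hq1 p hp
  have hψd : ∀ z ∈ U, HasDerivAt (fun z => mob s (q z))
      ((1 - conj s * s) / (1 - conj s * q z) ^ 2 *
        ((2 * q z)⁻¹ * ((1 - conj a * a) / (1 - conj a * φ z) ^ 2 * deriv φ z))) z := fun z hz =>
    (hasDerivAt_mob hs1 (hq1 z hz)).comp z (hqd z hz)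
  have haa := one_sub_conj_mul_self_ne ha
  have hss := one_sub_conj_mul_self_ne hs1
  refine ⟨fun z => mob s (q z), ⟨?_, ?_, ?_, ?_, ?_⟩, ?_⟩
  · exact fun z hz => (hψd z hz).differentiableAt.differentiableWithinAt
  · intro z hz w hw h
    have h1 : q z = q w := mob_injOn hs1 (by simpa using hq1 z hz) (by simpa using hq1 w hw) h
    have h2 : m z = m w := by rw [← hq, ← hq, h1]
    exact hφ.inj hz hw (mob_injOn ha (by simpa using hn z hz) (by simpa using hn w hw) h2)
  · intro z hz
    rw [(hψd z hz).deriv]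
    exact mul_ne_zero (div_ne_zero hss (pow_ne_zero 2 (mob_den_ne hs1 (hq1 z hz))))
      (mul_ne_zero (inv_ne_zero (mul_ne_zero two_ne_zero (hq0 z hz)))
        (mul_ne_zero (div_ne_zero haa (pow_ne_zero 2 (mob_den_ne ha (hn z hz))))
          (hφ.deriv_ne z hz)))
  · intro z hz
    simpa using norm_mob_lt hs1 (hq1 z hz)
  · simp [mob, hs]
  · rw [(hψd p hp).deriv, hφ.zero]
    have hsa : s ^ 2 = -a := by
      rw [hs, hq, hm]
      simp [mob, hφ.zero]
    set t := ‖s‖ with ht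
    have ht0 : 0 < t := norm_pos_iff.2 (hq0 p hp)
    have hta : ‖a‖ = t ^ 2 := by rw [ht, ← norm_pow, hsa, norm_neg]
    have hcs : ∀ b : ℂ, ‖b‖ < 1 → ‖1 - conj b * b‖ = 1 - ‖b‖ ^ 2 := by
      intro b hb
      rw [Complex.conj_mul', ← ofReal_pow, ← ofReal_one, ← ofReal_sub, norm_real,
        Real.norm_of_nonneg]
      nlinarith [norm_nonneg b]
    rw [← hs]
    simp only [norm_mul, norm_div, norm_pow, norm_inv, hcs a ha, hcs s hs1, hta, ← ht]
    have hd : 0 < ‖deriv φ p‖ := norm_pos_iff.2 (hφ.deriv_ne p hp)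
    have h1 : 0 < 1 - t ^ 2 := by nlinarith
    have h2 : (1 : ℝ) < (1 + t ^ 2) / (2 * t) := by
      rw [lt_div_iff₀ (by positivity)]
      nlinarith [sq_pos_of_pos (sub_pos.2 hs1)]
    have h3 : (1 - t ^ 2) / (1 - t ^ 2) ^ 2 *
        ((‖(2 : ℂ)‖ * t)⁻¹ * ((1 - (t ^ 2) ^ 2) / ‖1 - conj a * 0‖ ^ 2 * ‖deriv φ p‖)) =
        (1 + t ^ 2) / (2 * t) * ‖deriv φ p‖ := by
      simp
      field_simp
      ring
    rw [h3]
    nlinarith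

/-- The Riemann mapping theorem for convex domains in the right half-plane, normalised at `1`. -/
lemma riemann_map {Ω : Set ℂ} (hΩ : IsOpen Ω) (hc : Convex ℝ Ω) (hsub : Ω ⊆ rhp)
    (h1 : (1 : ℂ) ∈ Ω) :
    ∃ φ g : ℂ → ℂ, DifferentiableOn ℂ φ Ω ∧ MapsTo φ Ω (ball 0 1) ∧
      DifferentiableOn ℂ g (ball 0 1) ∧ MapsTo g (ball 0 1) Ω ∧
      LeftInvOn g φ Ω ∧ RightInvOn g φ (ball 0 1) ∧ φ 1 = 0 := by
  have hcand : IsRiemannCandidate Ω 1 fun z => (z - 1) / (z + 1) := by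
    have hne : ∀ z ∈ Ω, z + 1 ≠ 0 := by
      intro z hz h
      have h2 : 0 < z.re := hsub hz
      have := congrArg re h
      simp at this
      linarith
    have hd : ∀ z ∈ Ω, HasDerivAt (fun z : ℂ => (z - 1) / (z + 1)) (2 / (z + 1) ^ 2) z := by
      intro z hz
      refine (((hasDerivAt_id z).sub_const 1).fun_div ((hasDerivAt_id z).add_const 1)
        (hne z hz)).congr_deriv ?_
      simp
      ring
    refine ⟨fun z hz => (hd z hz).differentiableAt.differentiableWithinAt, ?_, ?_, ?_, by simp⟩
    · intro z hz w hw h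
      have e1 := hne z hz
      have e2 := hne w hw
      simp only at h
      rw [div_eq_div_iff e1 e2] at h
      linear_combination h / 2
    · intro z hz
      rw [(hd z hz).deriv]
      exact div_ne_zero two_ne_zero (pow_ne_zero 2 (hne z hz))
    · intro z hz
      have := norm_sub_lt_norm_add_conj (hsub hz) (q := 1) (by simp)
      rw [mem_ball_zero_iff, norm_div, div_lt_one (norm_pos_iff.2 (hne z hz))]
      simpa using this
  obtain ⟨φ, hφ, hmax⟩ := exists_extremal hΩ hc.isPreconnected h1 ⟨_, hcand⟩
  have hsurj : ∀ a ∈ ball (0 : ℂ) 1, ∃ z ∈ Ω, φ z = a := by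
    intro a ha
    by_contra! hom
    obtain ⟨ψ, hψ, hlt⟩ := exists_larger hΩ hc h1 hφ (by simpa using ha) hom
    exact absurd (hmax ψ hψ) (not_le.2 hlt)
  choose! g hgm hg using hsurj
  have hleft : LeftInvOn g φ Ω := fun z hz =>
    hφ.inj (hgm _ (hφ.maps hz)) hz (hg _ (hφ.maps hz))
  refine ⟨φ, g, hφ.diff, hφ.maps, ?_, hgm, hleft, hg, hφ.zero⟩
  intro a ha
  have hz := hgm a ha
  have hst : HasStrictDerivAt φ (deriv φ (g a)) (g a) :=
    (hφ.diff.analyticOnNhd hΩ _ hz).hasStrictDerivAt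
  have hne := hφ.deriv_ne _ hz
  have hmap := hst.map_nhds_eq hne
  rw [hg a ha] at hmap
  have hcont : ContinuousAt g a := by
    intro V hV
    rw [mem_map, ← hmap, mem_map]
    filter_upwards [hV, hΩ.mem_nhds hz] with z hzV hzΩ
    simpa [hleft hzΩ] using hzV
  exact (HasDerivAt.of_local_left_inverse hcont (hst.hasDerivAt) hne
    (by filter_upwards [isOpen_ball.mem_nhds ha] with w hw using hg w hw)).differentiableAt.differentiableWithinAt

/-! ### The normalised conformal map onto the half-plane -/

/-- `f : Ω → rhp` is a conformal bijection with inverse `F`, both commuting with complex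
conjugation; `f` fixes `1` and is increasing along the positive real axis. -/
structure IsAxialMap (Ω : Set ℂ) (f F : ℂ → ℂ) : Prop where
  diff : DifferentiableOn ℂ f Ω
  maps : MapsTo f Ω rhp
  diff_inv : DifferentiableOn ℂ F rhp
  maps_inv : MapsTo F rhp Ω
  left_inv : LeftInvOn F f Ω
  right_inv : RightInvOn F f rhp
  one : f 1 = 1
  map_conj : ∀ z ∈ Ω, f (conj z) = conj (f z)
  conj_inv : ∀ w ∈ rhp, F (conj w) = conj (F w)
  mono : ∀ x y : ℝ, 0 < x → x < y → (f x).re < (f y).re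

lemma conj_mem_rhp {w : ℂ} : conj w ∈ rhp ↔ w ∈ rhp := by simp

/-- A Riemann map of a symmetric domain, rotated to have positive derivative at the base point,
commutes with complex conjugation. -/
lemma conj_riemann_map {Ω : Set ℂ} (hΩ : IsOpen Ω) (h1 : (1 : ℂ) ∈ Ω)
    (hsym : ∀ z : ℂ, z ∈ Ω ↔ conj z ∈ Ω) {φ g : ℂ → ℂ} (hφ : DifferentiableOn ℂ φ Ω)
    (hφm : MapsTo φ Ω (ball 0 1)) (hg : DifferentiableOn ℂ g (ball 0 1))
    (hgm : MapsTo g (ball 0 1) Ω) (hl : LeftInvOn g φ Ω) (h0 : φ 1 = 0)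
    {d : ℝ} (hd : HasDerivAt φ d 1) : ∀ z ∈ Ω, φ (conj z) = conj (φ z) := by
  have h0b : (0 : ℂ) ∈ ball (0 : ℂ) 1 := mem_ball_self one_pos
  have hg0 : g 0 = 1 := by rw [← h0, hl h1]
  set k : ℂ → ℂ := fun ζ => (conj ∘ φ ∘ conj) (g ζ) with hk
  have hψ : ∀ z ∈ Ω, DifferentiableAt ℂ (conj ∘ φ ∘ conj) z := fun z hz => by
    rw [differentiableAt_conj_conj_iff]
    exact hφ.differentiableAt (hΩ.mem_nhds ((hsym z).1 hz))
  have hkd : DifferentiableOn ℂ k (ball 0 1) := fun ζ hζ =>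
    ((hψ _ (hgm hζ)).comp ζ (hg.differentiableAt (isOpen_ball.mem_nhds hζ))).differentiableWithinAt
  have hk0 : k 0 = 0 := by simp [hk, hg0, h0]
  have hkm : MapsTo k (ball 0 1) (closedBall (k 0) 1) := by
    intro ζ hζ
    rw [hk0]
    have := hφm ((hsym _).1 (hgm hζ))
    rw [mem_ball_zero_iff] at this
    simpa [hk] using this.le
  have hgd := hg.differentiableAt (isOpen_ball.mem_nhds h0b)
  have hprod := deriv_ne_of_leftInverse hΩ h1 (by rw [h0]; exact hgd)
    (hφ.differentiableAt (hΩ.mem_nhds h1)) hl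
  rw [h0, hd.deriv] at hprod
  have hkderiv : deriv k 0 = 1 := by
    have e1 : HasDerivAt (conj ∘ φ ∘ conj) (d : ℂ) (g 0) := by
      rw [hg0, hasDerivAt_conj_conj_iff]
      simpa using hd
    refine (e1.comp 0 hgd.hasDerivAt).deriv.trans ?_
    rw [mul_comm]
    exact hprod
  have haff := affine_of_mapsTo_ball_of_norm_dslope_eq_div hkd hkm h0b
    (by rw [dslope_same, hkderiv]; simp)
  intro z hz
  have := haff (hφm hz)
  rw [dslope_same, hkderiv, hk0] at this
  simp only [hk, hl hz, Function.comp, sub_zero, zero_add, smul_eq_mul, mul_one] at this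
  rw [← this, Complex.conj_conj]

lemma mem_ball_of_mem_rhp {w : ℂ} (hw : w ∈ rhp) : (w - 1) / (w + 1) ∈ ball (0 : ℂ) 1 := by
  have h := norm_sub_lt_norm_add_conj (q := 1) hw (by simp)
  rw [map_one] at h
  rw [mem_ball_zero_iff, norm_div, div_lt_one ((norm_nonneg _).trans_lt h)]
  exact h

lemma add_one_ne_zero_of_mem_rhp {w : ℂ} (hw : w ∈ rhp) : w + 1 ≠ 0 := by
  simpa using add_conj_ne_zero (q := 1) hw (by simp)

/-- A continuous injective function on the positive axis with positive derivative at `1` is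
increasing. -/
lemma strictMono_of_inj_of_deriv_pos {r : ℝ → ℝ} (hc : ContinuousOn r (Ioi 0))
    (hi : InjOn r (Ioi 0)) {d : ℝ} (hd : HasDerivAt r d 1) (hd0 : 0 < d) {x y : ℝ} (hx : 0 < x)
    (hxy : x < y) : r x < r y := by
  set a := min x (1 / 2)
  set b := max y 2
  have ha : 0 < a := by positivity
  have hab : a < b := ((min_le_left _ _).trans_lt hxy).trans_le (le_max_left _ _)
  have hsub : Icc a b ⊆ Ioi 0 := fun t ht => ha.trans_le ht.1
  rcases ContinuousOn.strictMonoOn_of_injOn_Icc' hab.le (hc.mono hsub) (hi.mono hsub) with h | h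
  · exact h ⟨min_le_left _ _, hxy.le.trans (le_max_left _ _)⟩
      ⟨(min_le_left _ _).trans hxy.le, le_max_left _ _⟩ hxy
  · exfalso
    have h1 : Icc a b ∈ 𝓝 (1 : ℝ) := Icc_mem_nhds
      ((min_le_right _ _).trans_lt (by norm_num)) (lt_of_lt_of_le (by norm_num) (le_max_right _ _))
    have h2 := h.antitoneOn.derivWithin_nonpos (x := 1)
    rw [derivWithin_of_mem_nhds h1, hd.deriv] at h2
    linarith

lemma exists_axialMap {Ω : Set ℂ} (hΩ : IsOpen Ω) (hc : Convex ℝ Ω) (hsub : Ω ⊆ rhp)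
    (haxis : ∀ x : ℝ, 0 < x → (x : ℂ) ∈ Ω) (hsym : ∀ z : ℂ, z ∈ Ω ↔ conj z ∈ Ω) :
    ∃ f F, IsAxialMap Ω f F := by
  have h1 : (1 : ℂ) ∈ Ω := by simpa using haxis 1 one_pos
  obtain ⟨φ₀, g₀, hφ₀, hφ₀m, hg₀, hg₀m, hl₀, hr₀, h0₀⟩ := riemann_map hΩ hc hsub h1
  have h0b : (0 : ℂ) ∈ ball (0 : ℂ) 1 := mem_ball_self one_pos
  -- rotate so that the derivative at `1` becomes positive
  have hφd := (hφ₀.differentiableAt (hΩ.mem_nhds h1)).hasDerivAt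
  have hne : deriv φ₀ 1 ≠ 0 := right_ne_zero_of_mul_eq_one (deriv_ne_of_leftInverse hΩ h1
    (by rw [h0₀]; exact hg₀.differentiableAt (isOpen_ball.mem_nhds h0b))
    (hφ₀.differentiableAt (hΩ.mem_nhds h1)) hl₀)
  set d : ℝ := ‖deriv φ₀ 1‖ with hd
  have hd0 : 0 < d := norm_pos_iff.2 hne
  set c : ℂ := d / deriv φ₀ 1 with hcdef
  have hcn : ‖c‖ = 1 := by
    rw [hcdef, norm_div, norm_real, hd, norm_norm, div_self (norm_ne_zero_iff.2 hne)]
  have hc0 : c ≠ 0 := by rw [← norm_ne_zero_iff, hcn]; exact one_ne_zero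
  set φ : ℂ → ℂ := fun z => c * φ₀ z with hφdef
  set g : ℂ → ℂ := fun ζ => g₀ (c⁻¹ * ζ) with hgdef
  have hrot : MapsTo (fun ζ => c⁻¹ * ζ) (ball 0 1) (ball (0 : ℂ) 1) := by
    intro ζ hζ
    simpa [norm_mul, hcn] using hζ
  have hφ : DifferentiableOn ℂ φ Ω := hφ₀.const_mul c
  have hφm : MapsTo φ Ω (ball 0 1) := by
    intro z hz
    simpa [hφdef, norm_mul, hcn] using hφ₀m hz
  have hg : DifferentiableOn ℂ g (ball 0 1) :=
    hg₀.comp (differentiable_id.const_mul _).differentiableOn hrot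
  have hgm : MapsTo g (ball 0 1) Ω := hg₀m.comp hrot
  have hl : LeftInvOn g φ Ω := by
    intro z hz
    simp only [hgdef, hφdef]
    rw [inv_mul_cancel_left₀ hc0, hl₀ hz]
  have hr : RightInvOn g φ (ball 0 1) := by
    intro ζ hζ
    simp only [hgdef, hφdef]
    rw [hr₀ (hrot hζ), mul_inv_cancel_left₀ hc0]
  have h0 : φ 1 = 0 := by simp [hφdef, h0₀]
  have hφ1 : HasDerivAt φ d 1 := by
    have := hφd.const_mul c
    rwa [hcdef, div_mul_cancel₀ _ hne] at this
  have hconj := conj_riemann_map hΩ h1 hsym hφ hφm hg hgm hl h0 hφ1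
  -- transport to the half-plane by the Cayley transform
  set f : ℂ → ℂ := fun z => (1 + φ z) / (1 - φ z) with hf
  set F : ℂ → ℂ := fun w => g ((w - 1) / (w + 1)) with hF
  have hfd : DifferentiableOn ℂ f Ω :=
    (hφ.const_add 1).div (hφ.const_sub 1) fun z hz => one_sub_ne_zero_of_mem_ball (hφm hz)
  have hfm : MapsTo f Ω rhp := fun z hz => re_cayley_pos (hφm hz)
  have hFd : DifferentiableOn ℂ F rhp := by
    refine hg.comp (fun w hw => ?_) fun w hw => mem_ball_of_mem_rhp hw
    have := add_one_ne_zero_of_mem_rhp hw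
    exact DifferentiableAt.differentiableWithinAt (by fun_prop (disch := assumption))
  have hFm : MapsTo F rhp Ω := fun w hw => hgm (mem_ball_of_mem_rhp hw)
  have hlinv : LeftInvOn F f Ω := by
    intro z hz
    have h2 := one_sub_ne_zero_of_mem_ball (hφm hz)
    have : (f z - 1) / (f z + 1) = φ z := by
      have h3 := add_one_ne_zero_of_mem_rhp (hfm hz)
      rw [div_eq_iff h3]
      simp only [hf]
      field_simp
      ring
    simp only [hF]
    rw [this, hl hz]
  have hrinv : RightInvOn F f rhp := by
    intro w hw
    have h3 := add_one_ne_zero_of_mem_rhp hw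
    simp only [hf, hF]
    rw [hr (mem_ball_of_mem_rhp hw)]
    have e1 : 1 - (w - 1) / (w + 1) = 2 / (w + 1) := by field_simp; ring
    have e2 : 1 + (w - 1) / (w + 1) = 2 * w / (w + 1) := by field_simp; ring
    rw [e1, e2]
    field_simp
  have hfc : ∀ z ∈ Ω, f (conj z) = conj (f z) := by
    intro z hz
    simp only [hf, hconj z hz, map_div₀, map_add, map_sub, map_one]
  refine ⟨f, F, hfd, hfm, hFd, hFm, hlinv, hrinv, by simp [hf, h0], hfc, ?_, ?_⟩
  · intro w hw
    have e1 : f (conj (F w)) = conj w := by rw [hfc _ (hFm hw), hrinv hw]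
    rw [← e1, hlinv ((hsym _).1 (hFm hw))]
  · intro x y hx hxy
    have hreal : ∀ x : ℝ, 0 < x → ((f x).re : ℂ) = f x := by
      intro x hx
      have := hfc x (haxis x hx)
      rw [conj_ofReal] at this
      exact conj_eq_iff_re.1 this.symm
    have hcont : ContinuousOn (fun x : ℝ => (f x).re) (Ioi 0) :=
      continuous_re.comp_continuousOn (hfd.continuousOn.comp continuous_ofReal.continuousOn
        fun x hx => haxis x hx)
    have hinj : InjOn (fun x : ℝ => (f x).re) (Ioi 0) := by
      intro a ha b hb hab
      have : f a = f b := by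
        rw [← hreal a ha, ← hreal b hb]
        exact congrArg _ hab
      exact_mod_cast hlinv.injOn (haxis a ha) (haxis b hb) this
    have hfder : HasDerivAt f ((2 * d : ℝ) : ℂ) ((1 : ℝ) : ℂ) := by
      rw [ofReal_one]
      have := (hφ1.const_add 1).fun_div (hφ1.const_sub 1) (by simp [h0])
      refine this.congr_deriv ?_
      simp [h0]
      ring
    exact strictMono_of_inj_of_deriv_pos hcont hinj hfder.real_of_complex
      (by rw [ofReal_re]; positivity) hx hxy

/-! ### Study's theorem -/

/-- An open convex subdomain of the right half-plane that contains the positive real axis and is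
symmetric about it; the half-plane itself is allowed. -/
structure IsAxialDomain (Ω : Set ℂ) : Prop where
  isOpen : IsOpen Ω
  convex : Convex ℝ Ω
  sub : Ω ⊆ rhp
  axis : ∀ x : ℝ, 0 < x → (x : ℂ) ∈ Ω
  symm : ∀ z : ℂ, z ∈ Ω ↔ conj z ∈ Ω

lemma deriv_conj_symm {f : ℂ → ℂ} {U : Set ℂ} (hU : IsOpen U)
    (hf : ∀ z ∈ U, f (conj z) = conj (f z)) {z : ℂ} (hz : z ∈ U) :
    deriv f (conj z) = conj (deriv f z) := by
  have : conj ∘ f ∘ conj =ᶠ[𝓝 (conj z)] f := by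
    have h1 : Tendsto conj (𝓝 (conj z)) (𝓝 z) := by
      simpa using (continuous_conj.tendsto (conj z))
    filter_upwards [h1.eventually (hU.mem_nhds hz)] with w hw
    have := hf _ hw
    rw [Complex.conj_conj] at this
    simp [this]
  rw [← this.deriv_eq, deriv_conj_conj]
  simp

/-- An open convex set containing the positive axis is invariant under translation to the right. -/
lemma IsAxialDomain.add_mem {Ω : Set ℂ} (hΩ : IsAxialDomain Ω) {z : ℂ} (hz : z ∈ Ω) {t : ℝ}
    (ht : 0 ≤ t) : z + t ∈ Ω := by
  rcases ht.eq_or_lt with rfl | ht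
  · simpa using hz
  have hc : Tendsto (fun s : ℝ => (s : ℂ) * z) (𝓝[>] 1) (𝓝 z) := by
    have : Continuous fun s : ℝ => (s : ℂ) * z := by fun_prop
    simpa using (this.tendsto 1).mono_left nhdsWithin_le_nhds
  obtain ⟨s, hs, hs1⟩ :=
    ((hc.eventually (hΩ.isOpen.mem_nhds hz)).and self_mem_nhdsWithin).exists
  have hs1' : (1 : ℝ) < s := hs1
  have hs0 : 0 < s := by linarith
  have h1 : 0 < 1 - s⁻¹ := sub_pos.2 (inv_lt_one_of_one_lt₀ hs1')
  have h2 := hΩ.convex hs (hΩ.axis (t / (1 - s⁻¹)) (by positivity)) (a := s⁻¹) (b := 1 - s⁻¹)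
    (by positivity) h1.le (by ring)
  convert h2 using 1
  have h3 : (s : ℂ) ≠ 0 := by exact_mod_cast hs0.ne'
  have h4 : (1 - (s : ℂ)⁻¹) ≠ 0 := by
    have : ((1 - s⁻¹ : ℝ) : ℂ) ≠ 0 := by exact_mod_cast h1.ne'
    simpa using this
  simp only [real_smul]
  push_cast
  rw [inv_mul_cancel_left₀ h3, ← mul_div_assoc, mul_div_cancel_left₀ _ h4]

namespace IsAxialMap

variable {Ω : Set ℂ} {f F : ℂ → ℂ}

lemma diffAt (h : IsAxialMap Ω f F) (hΩ : IsAxialDomain Ω) {z : ℂ} (hz : z ∈ Ω) :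
    DifferentiableAt ℂ f z := h.diff.differentiableAt (hΩ.isOpen.mem_nhds hz)

lemma diffAt_inv (h : IsAxialMap Ω f F) {w : ℂ} (hw : w ∈ rhp) :
    DifferentiableAt ℂ F w := h.diff_inv.differentiableAt (isOpen_rhp.mem_nhds hw)

lemma deriv_mul (h : IsAxialMap Ω f F) (hΩ : IsAxialDomain Ω) {w : ℂ} (hw : w ∈ rhp) :
    deriv f (F w) * deriv F w = 1 :=
  deriv_ne_of_leftInverse isOpen_rhp hw (h.diffAt hΩ (h.maps_inv hw)) (h.diffAt_inv hw)
    h.right_inv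

lemma inv_ofReal (h : IsAxialMap Ω f F) {x : ℝ} (hx : 0 < x) : ((F x).re : ℂ) = F x := by
  have := h.conj_inv x (by simpa using hx)
  rw [conj_ofReal] at this
  exact conj_eq_iff_re.1 this.symm

lemma inv_ofReal_pos (h : IsAxialMap Ω f F) (hΩ : IsAxialDomain Ω) {x : ℝ} (hx : 0 < x) :
    0 < (F x).re := hΩ.sub (h.maps_inv (by simpa using hx))

/-- Translating to the right increases `Re f`: by Julia's lemma it suffices to check the axis. -/
lemma re_le_re_add (h : IsAxialMap Ω f F) (hΩ : IsAxialDomain Ω) {z : ℂ} (hz : z ∈ Ω) {t : ℝ}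
    (ht : 0 ≤ t) : (f z).re ≤ (f (z + t)).re := by
  have hd : DifferentiableOn ℂ (fun w => f (F w + t)) rhp :=
    h.diff.comp (h.diff_inv.add_const _) fun w hw => hΩ.add_mem (h.maps_inv hw) ht
  have hm : MapsTo (fun w => f (F w + t)) rhp rhp := fun w hw =>
    h.maps (hΩ.add_mem (h.maps_inv hw) ht)
  have hj := julia_rhp hd hm (c := 1) (by
    filter_upwards [eventually_gt_atTop 0] with x hx
    have hx' : (x : ℂ) ∈ rhp := by simpa using hx
    have h1 : f ((F x).re : ℝ) = x := by rw [h.inv_ofReal hx, h.right_inv hx']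
    rw [← h.inv_ofReal hx, ← ofReal_add]
    have h2 : (f ((F x).re : ℝ)).re ≤ (f (((F x).re + t : ℝ) : ℂ)).re := by
      rcases ht.eq_or_lt with rfl | ht
      · simp
      · exact (h.mono _ _ (h.inv_ofReal_pos hΩ hx) (by linarith)).le
    rw [h1, ofReal_re] at h2
    linarith) (h.maps hz)
  simpa [h.left_inv hz] using hj

lemma deriv_re_pos (h : IsAxialMap Ω f F) (hΩ : IsAxialDomain Ω) {z : ℂ} (hz : z ∈ Ω) :
    0 < (deriv f z).re := by
  have hnn : ∀ z ∈ Ω, 0 ≤ (deriv f z).re := by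
    intro z hz
    have h1 : HasDerivAt (fun t : ℝ => (f (z + t)).re) (deriv f z).re 0 := by
      have h2 : HasDerivAt (fun τ : ℂ => f (z + τ)) (deriv f z) ((0 : ℝ) : ℂ) := by
        refine HasDerivAt.comp_const_add z _ ?_
        simpa using (h.diffAt hΩ hz).hasDerivAt
      exact h2.real_of_complex
    have h3 := h1.hasDerivWithinAt (s := Ioi 0)
    rw [hasDerivWithinAt_iff_tendsto_slope' self_notMem_Ioi] at h3
    refine ge_of_tendsto h3 ?_
    filter_upwards [self_mem_nhdsWithin] with t ht
    have ht' : (0 : ℝ) < t := ht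
    rw [slope_def_field]
    refine div_nonneg ?_ (by linarith)
    simpa using h.re_le_re_add hΩ hz ht'.le
  refine (hnn z hz).lt_of_ne' fun h0 => ?_
  have h1m : (1 : ℂ) ∈ Ω := by simpa using hΩ.axis 1 one_pos
  have hconst := eqOn_const_of_re_nonneg hΩ.isOpen hΩ.convex.isPreconnected
    (h.diff.deriv hΩ.isOpen) hnn hz h0 1 h1m
  have hreal := deriv_conj_symm hΩ.isOpen h.map_conj h1m
  rw [map_one] at hreal
  have h2 : deriv f 1 = 0 := by
    rw [← conj_eq_iff_re.1 hreal.symm, hconst, h0, ofReal_zero]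
  have h3 := h.deriv_mul hΩ (w := 1) (by simp)
  have h4 : F 1 = 1 := by
    have := h.left_inv h1m
    rwa [h.one] at this
  rw [h4, h2, zero_mul] at h3
  exact zero_ne_one h3

lemma deriv_inv_eq (h : IsAxialMap Ω f F) (hΩ : IsAxialDomain Ω) {w : ℂ} (hw : w ∈ rhp) :
    deriv F w = (deriv f (F w))⁻¹ := eq_inv_of_mul_eq_one_right (h.deriv_mul hΩ hw)

lemma deriv_inv_re_pos (h : IsAxialMap Ω f F) (hΩ : IsAxialDomain Ω) {w : ℂ} (hw : w ∈ rhp) :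
    0 < (deriv F w).re := by
  have h1 := h.deriv_re_pos hΩ (h.maps_inv hw)
  rw [h.deriv_inv_eq hΩ hw, inv_re]
  exact div_pos h1 (normSq_pos.2 fun h0 => by simp [h0] at h1)

lemma deriv_inv_ofReal (h : IsAxialMap Ω f F) {x : ℝ} (hx : 0 < x) :
    ((deriv F x).re : ℂ) = deriv F x := by
  have := deriv_conj_symm isOpen_rhp h.conj_inv (z := x) (by simpa using hx)
  rw [conj_ofReal] at this
  exact conj_eq_iff_re.1 this.symm

/-- Schwarz–Pick for `F'` shows that `F` is nearly affine on discs that are small relative to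
their distance from the imaginary axis. -/
lemma norm_sub_affine_le (h : IsAxialMap Ω f F) (hΩ : IsAxialDomain Ω) {x : ℝ} (hx : 0 < x)
    {w : ℂ} (hw : ‖w - x‖ ≤ x / 4) :
    ‖F w - F x - (deriv F x).re * (w - x)‖ ≤ (deriv F x).re / 3 * ‖w - x‖ := by
  set p := (deriv F x).re with hp
  have hxm : (x : ℂ) ∈ rhp := by simpa using hx
  have hp0 : 0 < p := h.deriv_inv_re_pos hΩ hxm
  have hsub : closedBall (x : ℂ) (x / 4) ⊆ rhp := by
    intro v hv
    rw [mem_closedBall, dist_eq_norm] at hv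
    have h1 := (abs_re_le_norm (v - x)).trans hv
    rw [sub_re, ofReal_re, abs_le] at h1
    rw [mem_rhp]
    linarith [h1.1]
  have hbd : ∀ v ∈ closedBall (x : ℂ) (x / 4), ‖deriv F v - p‖ ≤ p / 3 := by
    intro v hv
    have sp := schwarz_pick_rhp (h.diff_inv.deriv isOpen_rhp)
      (fun w hw => h.deriv_inv_re_pos hΩ hw) (hsub hv) hxm
    rw [← h.deriv_inv_ofReal hx, ← hp, conj_ofReal, conj_ofReal] at sp
    rw [mem_closedBall, dist_eq_norm] at hv
    have e1 : 7 * x / 4 ≤ ‖v + x‖ := by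
      have h2 : ‖(2 * x : ℂ)‖ ≤ ‖v + x‖ + ‖v - x‖ := by
        have : (2 * x : ℂ) = (v + x) - (v - x) := by ring
        rw [this]; exact norm_sub_le _ _
      have h3 : ‖(2 * x : ℂ)‖ = 2 * x := by simp [abs_of_pos hx]
      linarith
    have e2 : ‖deriv F v + p‖ ≤ ‖deriv F v - p‖ + 2 * p := by
      have h3 : ‖(2 * p : ℂ)‖ = 2 * p := by simp [abs_of_pos hp0]
      have : deriv F v + p = (deriv F v - p) + 2 * p := by ring
      rw [this, ← h3]; exact norm_add_le _ _
    set D := ‖deriv F v - p‖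
    have hD : 0 ≤ D := norm_nonneg _
    have e3 : D * (7 * x / 4) ≤ x / 4 * (D + 2 * p) :=
      (mul_le_mul_of_nonneg_left e1 hD).trans (sp.trans
        (mul_le_mul hv e2 (norm_nonneg _) (by positivity)))
    have e4 : x * (7 * D) ≤ x * (D + 2 * p) := by linarith
    have := le_of_mul_le_mul_left e4 hx
    linarith
  have hmv := (convex_closedBall (x : ℂ) (x / 4)).norm_image_sub_le_of_norm_hasDerivWithin_le
    (f := fun v => F v - p * v) (f' := fun v => deriv F v - p) (C := p / 3)
    (x := (x : ℂ)) (y := w)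
    (fun v hv => by
      have h1 := (h.diffAt_inv (hsub hv)).hasDerivAt.sub ((hasDerivAt_id v).const_mul (p : ℂ))
      rw [mul_one] at h1
      exact h1.hasDerivWithinAt) hbd
    (mem_closedBall_self (by positivity)) (by rwa [mem_closedBall, dist_eq_norm])
  have e : F w - F x - p * (w - x) = (F w - p * w) - (F x - p * x) := by ring
  rw [e]
  exact hmv

/-- Study's theorem for the half-plane: at the midpoint of the chord of `Ω` joining the images of two
points on the same vertical line, `Re f` is at least as large as at the endpoints. -/
lemma study (h : IsAxialMap Ω f F) (hΩ : IsAxialDomain Ω) (s : ℝ) {w : ℂ} (hw : w ∈ rhp) :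
    w.re ≤ (f ((F (w + s * I) + F (w - s * I)) / 2)).re := by
  have hp : ∀ w ∈ rhp, w + s * I ∈ rhp := fun w hw => by simpa using hw
  have hn : ∀ w ∈ rhp, w - s * I ∈ rhp := fun w hw => by simpa using hw
  have hmid : ∀ w ∈ rhp, (F (w + s * I) + F (w - s * I)) / 2 ∈ Ω := by
    intro w hw
    have := hΩ.convex (h.maps_inv (hp w hw)) (h.maps_inv (hn w hw)) (a := 1 / 2) (b := 1 / 2)
      (by norm_num) (by norm_num) (by norm_num)
    convert this using 1
    simp only [real_smul]
    push_cast
    ring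
  have hd : DifferentiableOn ℂ (fun w => f ((F (w + s * I) + F (w - s * I)) / 2)) rhp := by
    refine h.diff.comp ?_ hmid
    refine ((h.diff_inv.comp ?_ hp).add (h.diff_inv.comp ?_ hn)).div_const 2
    · exact (differentiable_id.add_const _).differentiableOn
    · exact (differentiable_id.sub_const _).differentiableOn
  have hm : MapsTo (fun w => f ((F (w + s * I) + F (w - s * I)) / 2)) rhp rhp :=
    fun w hw => h.maps (hmid w hw)
  have key : ∀ ε : ℝ, 0 < ε → ε ≤ 1 / 4 →
      (1 - ε) * w.re ≤ (f ((F (w + s * I) + F (w - s * I)) / 2)).re := by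
    intro ε hε hε4
    refine julia_rhp hd hm ?_ hw
    filter_upwards [eventually_gt_atTop 0, eventually_ge_atTop (4 * |s|),
      eventually_ge_atTop (|s| / (2 * ε))] with x hx hx1 hx2
    rw [div_le_iff₀ (by positivity)] at hx2
    have hxm : (x : ℂ) ∈ rhp := by simpa using hx
    set p := (deriv F x).re with hpdef
    have hp0 : 0 < p := h.deriv_inv_re_pos hΩ hxm
    have hy : 0 < (1 - ε) * x := mul_pos (by linarith) hx
    -- on the axis the midpoint is the real number `Re F (x + is)`
    have hmid_eq : (F (x + s * I) + F (x - s * I)) / 2 = ((F (x + s * I)).re : ℂ) := by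
      have h1 : (x : ℂ) - s * I = conj ((x : ℂ) + s * I) := by simp [sub_eq_add_neg]
      rw [h1, h.conj_inv _ (hp _ hxm), add_conj]
      push_cast
      ring
    have b1 := h.norm_sub_affine_le hΩ hx (w := x + s * I) (by simp; linarith)
    have b2 := h.norm_sub_affine_le hΩ hx (w := ((1 - ε) * x : ℝ)) (by
      have : (((1 - ε) * x : ℝ) : ℂ) - x = ((-(ε * x) : ℝ) : ℂ) := by push_cast; ring
      rw [this, norm_real, norm_neg, Real.norm_of_nonneg (by positivity)]
      nlinarith)
    have c1 := (abs_le.1 ((abs_re_le_norm _).trans b1)).1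
    have c2 := (abs_le.1 ((abs_re_le_norm _).trans b2)).2
    have n1 : ‖(x : ℂ) + s * I - x‖ = |s| := by simp
    have n2 : ‖(((1 - ε) * x : ℝ) : ℂ) - x‖ = ε * x := by
      have : (((1 - ε) * x : ℝ) : ℂ) - x = ((-(ε * x) : ℝ) : ℂ) := by push_cast; ring
      rw [this, norm_real, norm_neg, Real.norm_of_nonneg (by positivity)]
    rw [n1] at c1
    rw [n2] at c2
    simp only [sub_re, add_re, ofReal_re, mul_re, I_re, ofReal_im, I_im] at c1 c2
    have c3 : (F (((1 - ε) * x : ℝ) : ℂ)).re ≤ (F (x + s * I)).re := by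
      nlinarith [mul_nonneg hp0.le (sub_nonneg.2 hx2)]
    have c4 : f ((F (((1 - ε) * x : ℝ) : ℂ)).re : ℝ) = ((1 - ε) * x : ℝ) := by
      rw [h.inv_ofReal hy, h.right_inv (by simpa using hy)]
    have c5 : (f ((F (((1 - ε) * x : ℝ) : ℂ)).re : ℝ)).re ≤ (f ((F (x + s * I)).re : ℝ)).re := by
      rcases c3.eq_or_lt with h3 | h3
      · rw [h3]
      · exact (h.mono _ _ (h.inv_ofReal_pos hΩ hy) h3).le
    rw [c4, ofReal_re] at c5
    rw [hmid_eq]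
    exact c5
  have hlim : Tendsto (fun ε : ℝ => (1 - ε) * w.re) (𝓝[>] 0) (𝓝 w.re) := by
    have : Continuous fun ε : ℝ => (1 - ε) * w.re := by fun_prop
    simpa using (this.tendsto 0).mono_left nhdsWithin_le_nhds
  refine le_of_tendsto hlim ?_
  filter_upwards [Ioc_mem_nhdsGT (show (0 : ℝ) < 1 / 4 by norm_num)] with ε hε
  exact key ε hε.1 hε.2

end IsAxialMap

/-! ### The sign of the pre-Schwarzian derivative -/

/-- The second derivative is nonnegative at a local minimum. -/
lemma deriv_deriv_nonneg_of_isLocalMin {k : ℝ → ℝ} {a : ℝ} (hk : IsLocalMin k a)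
    (hc : ContinuousAt k a) : 0 ≤ deriv (deriv k) a := by
  by_contra! hneg
  have hmax := isLocalMax_of_deriv_deriv_neg hneg hk.deriv_eq_zero hc
  have hconst : k =ᶠ[𝓝 a] fun _ => k a := by
    filter_upwards [hk, hmax] with x h1 h2 using le_antisymm h2 h1
  have : deriv k =ᶠ[𝓝 a] fun _ => 0 := by
    filter_upwards [hconst.eventuallyEq_nhds] with x hx
    rw [hx.deriv_eq, deriv_const]
  rw [this.deriv_eq, deriv_const] at hneg
  exact lt_irrefl _ hneg

namespace IsAxialMap

variable {Ω : Set ℂ} {f F : ℂ → ℂ}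

lemma deriv_inv_ne (h : IsAxialMap Ω f F) (hΩ : IsAxialDomain Ω) {w : ℂ} (hw : w ∈ rhp) :
    deriv F w ≠ 0 := fun h0 => by simpa [h0] using h.deriv_inv_re_pos hΩ hw

/-- The infinitesimal form of Study's theorem. -/
lemma re_div_nonpos (h : IsAxialMap Ω f F) (hΩ : IsAxialDomain Ω) {w : ℂ} (hw : w ∈ rhp) :
    (deriv (deriv F) w / deriv F w).re ≤ 0 := by
  have hw0 : 0 < w.re := hw
  set M : ℂ → ℂ := fun τ => (F (w + τ) + F (w - τ)) / 2 with hM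
  have hre : ∀ τ ∈ ball (0 : ℂ) w.re, |τ.re| < w.re := fun τ hτ =>
    (abs_re_le_norm τ).trans_lt (by simpa using hτ)
  have hp : ∀ τ ∈ ball (0 : ℂ) w.re, w + τ ∈ rhp := fun τ hτ => by
    rw [mem_rhp, add_re]; linarith [(abs_lt.1 (hre τ hτ)).1]
  have hn : ∀ τ ∈ ball (0 : ℂ) w.re, w - τ ∈ rhp := fun τ hτ => by
    rw [mem_rhp, sub_re]; linarith [(abs_lt.1 (hre τ hτ)).2]
  have hMm : ∀ τ ∈ ball (0 : ℂ) w.re, M τ ∈ Ω := by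
    intro τ hτ
    have := hΩ.convex (h.maps_inv (hp τ hτ)) (h.maps_inv (hn τ hτ)) (a := 1 / 2) (b := 1 / 2)
      (by norm_num) (by norm_num) (by norm_num)
    convert this using 1
    simp only [real_smul, hM]
    push_cast
    ring
  have hF' : DifferentiableOn ℂ (deriv F) rhp := h.diff_inv.deriv isOpen_rhp
  have hsum : ∀ {G : ℂ → ℂ} {τ : ℂ}, τ ∈ ball (0 : ℂ) w.re → DifferentiableOn ℂ G rhp →
      HasDerivAt (fun τ => G (w + τ)) (deriv G (w + τ)) τ ∧
      HasDerivAt (fun τ => G (w - τ)) (-deriv G (w - τ)) τ := by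
    intro G τ hτ hG
    exact ⟨(hG.differentiableAt (isOpen_rhp.mem_nhds (hp τ hτ))).hasDerivAt.comp_const_add w τ,
      (hG.differentiableAt (isOpen_rhp.mem_nhds (hn τ hτ))).hasDerivAt.comp_const_sub w τ⟩
  have hMd : ∀ τ ∈ ball (0 : ℂ) w.re,
      HasDerivAt M ((deriv F (w + τ) - deriv F (w - τ)) / 2) τ := by
    intro τ hτ
    obtain ⟨h1, h2⟩ := hsum hτ h.diff_inv
    refine ((h1.add h2).div_const 2).congr_deriv ?_
    ring
  have hQd : ∀ τ ∈ ball (0 : ℂ) w.re, HasDerivAt (fun τ => f (M τ))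
      (deriv f (M τ) * ((deriv F (w + τ) - deriv F (w - τ)) / 2)) τ := fun τ hτ =>
    (h.diffAt hΩ (hMm τ hτ)).hasDerivAt.comp τ (hMd τ hτ)
  have h0 : (0 : ℂ) ∈ ball (0 : ℂ) w.re := mem_ball_self hw0
  have hM0 : M 0 = F w := by simp [hM]
  have hQ2 : HasDerivAt (fun τ => deriv f (M τ) * ((deriv F (w + τ) - deriv F (w - τ)) / 2))
      (deriv f (F w) * deriv (deriv F) w) 0 := by
    obtain ⟨h1, h2⟩ := hsum h0 hF'
    have h3 : DifferentiableAt ℂ (fun τ => deriv f (M τ)) 0 :=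
      ((h.diff.deriv hΩ.isOpen).differentiableAt (hΩ.isOpen.mem_nhds (hMm 0 h0))).comp 0
        (hMd 0 h0).differentiableAt
    refine (h3.hasDerivAt.mul ((h1.sub h2).div_const 2)).congr_deriv ?_
    simp [hM0]
  set k : ℝ → ℝ := fun s => (f (M (s * I))).re with hk
  have hmem : ∀ᶠ s : ℝ in 𝓝 0, (s : ℂ) * I ∈ ball (0 : ℂ) w.re := by
    have : Continuous fun s : ℝ => (s : ℂ) * I := by fun_prop
    exact (this.tendsto 0).eventually (isOpen_ball.mem_nhds (by simpa using hw0))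
  have hmul : ∀ s : ℝ, HasDerivAt (fun s : ℂ => s * I) I (s : ℂ) := fun s => by
    simpa using (hasDerivAt_id (s : ℂ)).mul_const I
  have hkd : ∀ s : ℝ, (s : ℂ) * I ∈ ball (0 : ℂ) w.re → HasDerivAt k
      (deriv f (M (s * I)) * ((deriv F (w + s * I) - deriv F (w - s * I)) / 2) * I).re s :=
    fun s hs => HasDerivAt.real_of_complex
      (HasDerivAt.comp (s : ℂ) (h₂ := fun τ => f (M τ)) (hQd _ hs) (hmul s))
  have hk2 : deriv (deriv k) 0 = -(deriv f (F w) * deriv (deriv F) w).re := by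
    have e1 : deriv k =ᶠ[𝓝 0] fun s : ℝ =>
        (deriv f (M (s * I)) * ((deriv F (w + s * I) - deriv F (w - s * I)) / 2) * I).re := by
      filter_upwards [hmem] with s hs using (hkd s hs).deriv
    rw [e1.deriv_eq]
    have e2 : HasDerivAt (fun s : ℂ => deriv f (M (s * I)) *
        ((deriv F (w + s * I) - deriv F (w - s * I)) / 2) * I)
        (deriv f (F w) * deriv (deriv F) w * I * I) ((0 : ℝ) : ℂ) := by
      refine HasDerivAt.mul_const (HasDerivAt.comp (h₂ := fun τ => deriv f (M τ) *
        ((deriv F (w + τ) - deriv F (w - τ)) / 2)) _ ?_ (hmul 0)) I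
      simpa using hQ2
    rw [e2.real_of_complex.deriv, mul_assoc, I_mul_I]
    simp
  have hmin : IsLocalMin k 0 := by
    refine Eventually.of_forall fun s => ?_
    have := h.study hΩ s hw
    simp only [hk, ofReal_zero, zero_mul, hM0, h.right_inv hw]
    exact this
  have := deriv_deriv_nonneg_of_isLocalMin hmin (hkd 0 (by simpa using hw0)).continuousAt
  rw [hk2, h.deriv_inv_eq hΩ hw |> inv_eq_iff_eq_inv.2 |> Eq.symm] at this
  rw [div_eq_inv_mul]
  linarith

/-- Equality in the infinitesimal form of Study's theorem forces the domain to be the whole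
half-plane. -/
lemma re_div_neg (h : IsAxialMap Ω f F) (hΩ : IsAxialDomain Ω) (hne : Ω ≠ rhp) {w : ℂ}
    (hw : w ∈ rhp) : (deriv (deriv F) w / deriv F w).re < 0 := by
  refine (h.re_div_nonpos hΩ hw).lt_of_ne fun hw0 => hne ?_
  have hF' : DifferentiableOn ℂ (deriv F) rhp := h.diff_inv.deriv isOpen_rhp
  have hLd : DifferentiableOn ℂ (fun w => -(deriv (deriv F) w / deriv F w)) rhp :=
    ((hF'.deriv isOpen_rhp).div hF' fun w hw => h.deriv_inv_ne hΩ hw).neg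
  have hconst := eqOn_const_of_re_nonneg isOpen_rhp convex_rhp.isPreconnected hLd
    (fun z hz => by rw [neg_re]; linarith [h.re_div_nonpos hΩ hz]) hw (by rw [neg_re, hw0, neg_zero])
  set l := deriv (deriv F) w / deriv F w with hl
  have hode : ∀ z ∈ rhp, deriv (deriv F) z = l * deriv F z := by
    intro z hz
    have := neg_injective (hconst z hz)
    rwa [div_eq_iff (h.deriv_inv_ne hΩ hz)] at this
  have h1 : (1 : ℂ) ∈ rhp := by simp
  have hexp : ∀ z ∈ rhp, deriv F z = deriv F 1 * exp (l * (z - 1)) := by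
    intro z hz
    have hd : ∀ z ∈ rhp, HasDerivAt (fun z => deriv F z * exp (-(l * (z - 1)))) 0 z := by
      intro z hz
      have a1 := (hF'.differentiableAt (isOpen_rhp.mem_nhds hz)).hasDerivAt
      have a2 := ((((hasDerivAt_id z).sub_const 1).const_mul l).neg).cexp
      refine (a1.mul a2).congr_deriv ?_
      rw [hode z hz]
      simp
      ring
    have := isOpen_rhp.is_const_of_deriv_eq_zero convex_rhp.isPreconnected
      (fun z hz => (hd z hz).differentiableAt.differentiableWithinAt)
      (fun z hz => (hd z hz).deriv) hz h1
    simp only [sub_self, mul_zero, neg_zero, exp_zero, mul_one] at this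
    rw [← this, mul_assoc, ← Complex.exp_add]
    simp
  have hpos1 := h.deriv_inv_re_pos hΩ h1
  have hlre : l.re = 0 := hw0
  have hl0 : l = 0 := by
    by_contra hl0
    have him : l.im ≠ 0 := fun h0 => hl0 (Complex.ext hlre h0)
    -- `F'` would take the value `-F' 1` at `1 + π / |Im l|`
    have hx : (0 : ℝ) < 1 + Real.pi / |l.im| := by positivity
    have h2 : ((1 + Real.pi / |l.im| : ℝ) : ℂ) ∈ rhp := by simpa using hx
    have h3 := h.deriv_inv_re_pos hΩ h2
    have h4 : l = l.im * I := by
      apply Complex.ext <;> simp [hlre]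
    have h5 : exp (l * (((1 + Real.pi / |l.im| : ℝ) : ℂ) - 1)) = -1 := by
      rcases lt_or_gt_of_ne him with hlt | hgt
      · have : l * (((1 + Real.pi / |l.im| : ℝ) : ℂ) - 1) = -(Real.pi * I) := by
          rw [abs_of_neg hlt, h4]
          have : (l.im : ℂ) ≠ 0 := by exact_mod_cast him
          simp
          field_simp
        rw [this, Complex.exp_neg, exp_pi_mul_I]
        norm_num
      · have : l * (((1 + Real.pi / |l.im| : ℝ) : ℂ) - 1) = Real.pi * I := by
          rw [abs_of_pos hgt, h4]
          have : (l.im : ℂ) ≠ 0 := by exact_mod_cast him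
          simp
          field_simp
        rw [this, exp_pi_mul_I]
    rw [hexp _ h2, h5, mul_neg_one, neg_re] at h3
    linarith
  -- `F` is affine, so `Ω` is a half-plane
  set C := (deriv F 1).re with hC
  have hFC : ∀ z ∈ rhp, deriv F z = C := by
    intro z hz
    have := h.deriv_inv_ofReal one_pos
    rw [ofReal_one] at this
    rw [hexp z hz, hl0, zero_mul, Complex.exp_zero, mul_one, hC, this]
  have haff : ∀ z ∈ rhp, F z = C * z + ((F 1).re - C : ℝ) := by
    intro z hz
    have hd : ∀ z ∈ rhp, HasDerivAt (fun z => F z - C * z) 0 z := by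
      intro z hz
      refine ((h.diffAt_inv hz).hasDerivAt.sub ((hasDerivAt_id z).const_mul (C : ℂ))).congr_deriv ?_
      rw [hFC z hz]
      simp
    have e1 := isOpen_rhp.is_const_of_deriv_eq_zero convex_rhp.isPreconnected
      (fun z hz => (hd z hz).differentiableAt.differentiableWithinAt)
      (fun z hz => (hd z hz).deriv) hz h1
    have e2 := h.inv_ofReal one_pos
    rw [ofReal_one] at e2
    simp only [mul_one] at e1
    push_cast
    rw [e2]
    linear_combination e1
  set D : ℝ := (F 1).re - C with hD
  have hDle : D ≤ 0 := by
    by_contra! hD0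
    have hm := hΩ.axis (D / 2) (by positivity)
    have e1 := haff _ (h.maps hm)
    rw [h.left_inv hm] at e1
    have e2 := congrArg re e1
    have e3 : 0 < (f ((D / 2 : ℝ) : ℂ)).re := h.maps hm
    simp only [add_re, re_ofReal_mul, ofReal_re] at e2
    nlinarith
  refine subset_antisymm hΩ.sub fun z hz => ?_
  have hz0 : 0 < z.re := hz
  have hCne : (C : ℂ) ≠ 0 := by exact_mod_cast hpos1.ne'
  have e0 : (z - D) / C ∈ rhp := by
    rw [mem_rhp, div_ofReal_re]
    refine div_pos ?_ hpos1
    rw [sub_re, ofReal_re]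
    linarith
  have e1 := h.maps_inv e0
  rw [haff _ e0, mul_div_cancel₀ _ hCne] at e1
  simpa using e1

end IsAxialMap

/-! ### The Poisson kernel and harmonicity -/

/-- A positive harmonic function on the unit disc that tends to zero at the unit circle,
uniformly away from the point `1`, is a multiple of the Poisson kernel with pole at `1`. -/
lemma eq_poisson_of_tendsto_zero {U : ℂ → ℝ}
    (hU : InnerProductSpace.HarmonicOnNhd U (ball 0 1)) (hpos : ∀ η ∈ ball (0 : ℂ) 1, 0 < U η)
    (hb : ∀ δ > 0, ∀ ε > 0, ∃ r₀ < 1, ∀ η : ℂ, r₀ < ‖η‖ → ‖η‖ < 1 → δ ≤ ‖η - 1‖ → U η < ε)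
    {ζ : ℂ} (hζ : ζ ∈ ball (0 : ℂ) 1) : U ζ = (1 - ‖ζ‖ ^ 2) / ‖1 - ζ‖ ^ 2 * U 0 := by
  have hζ1 : ‖ζ‖ < 1 := mem_ball_zero_iff.1 hζ
  have h1ζ : (1 : ℂ) - ζ ≠ 0 := one_sub_ne_zero_of_mem_ball hζ
  set P : ℂ → ℝ := poissonKernel 0 ζ with hP
  have hPe : ∀ η, P η = (‖η‖ ^ 2 - ‖ζ‖ ^ 2) / ‖η - ζ‖ ^ 2 := fun η => by
    simp [hP, poissonKernel_def]
  have hPc : ∀ η, η ≠ ζ → ContinuousAt P η := fun η hη => by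
    have : P = fun η => (‖η‖ ^ 2 - ‖ζ‖ ^ 2) / ‖η - ζ‖ ^ 2 := funext hPe
    rw [this]
    have : ‖η - ζ‖ ^ 2 ≠ 0 := by simpa [sub_eq_zero] using hη
    fun_prop (disch := assumption)
  have hP1 : P 1 = (1 - ‖ζ‖ ^ 2) / ‖1 - ζ‖ ^ 2 := by simp [hPe]
  rw [← hP1]
  have hU0 : 0 < U 0 := hpos 0 (mem_ball_self one_pos)
  set M : ℝ := 4 / (1 - ‖ζ‖) with hM
  have hMpos : 0 < M := div_pos (by norm_num) (by linarith)
  have hPM : ∀ η : ℂ, (1 + ‖ζ‖) / 2 < ‖η‖ → ‖η‖ ≤ 1 → 0 ≤ P η ∧ P η ≤ M := by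
    intro η h1 h2
    have h3 : ‖η‖ - ‖ζ‖ ≤ ‖η - ζ‖ := norm_sub_norm_le _ _
    have h4 : 0 < ‖η‖ - ‖ζ‖ := by linarith
    have h5 := norm_nonneg ζ
    rw [hPe, hM]
    constructor
    · apply div_nonneg _ (sq_nonneg _)
      nlinarith
    · rw [div_le_div_iff₀ (by nlinarith) (by linarith)]
      have h6 : (‖η‖ - ‖ζ‖) ^ 2 ≤ ‖η - ζ‖ ^ 2 := by gcongr
      have h7 : (‖η‖ ^ 2 - ‖ζ‖ ^ 2) * (1 - ‖ζ‖) ≤ (2 * (‖η‖ - ‖ζ‖)) * (2 * (‖η‖ - ‖ζ‖)) := by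
        have : ‖η‖ ^ 2 - ‖ζ‖ ^ 2 ≤ 2 * (‖η‖ - ‖ζ‖) := by nlinarith
        apply mul_le_mul this (by linarith) (by linarith) (by linarith)
      nlinarith
  have hP1M := hPM 1 (by simp; linarith) (by simp)
  have key : ∀ ε > 0, |U ζ - P 1 * U 0| ≤ ε * (U 0 + 1) := by
    intro ε hε
    obtain ⟨δ, hδ, hδP⟩ := Metric.continuousAt_iff.1 (hPc 1 (fun h => h1ζ (by simp [← h]))) ε hε
    obtain ⟨r₀, hr₀, hsmall⟩ := hb δ hδ (ε / M) (div_pos hε hMpos)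
    obtain ⟨r, hr1, hr2⟩ := exists_between (max_lt hr₀ (show (1 + ‖ζ‖) / 2 < 1 by linarith))
    obtain ⟨hrr, hrz⟩ := max_lt_iff.1 hr1
    have hr0 : 0 < r := by have := norm_nonneg ζ; linarith
    have hrabs : |r| = r := abs_of_pos hr0
    have hsub : closedBall (0 : ℂ) r ⊆ ball 0 1 := closedBall_subset_ball hr2
    have hUr : InnerProductSpace.HarmonicOnNhd U (closedBall 0 r) := fun x hx => hU x (hsub hx)
    have e1 : Real.circleAverage (P • U) 0 r = U ζ :=
      hUr.circleAverage_poissonKernel_smul (mem_ball_zero_iff.2 (by linarith))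
    have e2 : Real.circleAverage U 0 r = U 0 :=
      InnerProductSpace.HarmonicOnNhd.circleAverage_eq (by rwa [hrabs])
    have cU : ContinuousOn U (sphere 0 |r|) := by
      rw [hrabs]; exact hUr.continuousOn.mono sphere_subset_closedBall
    have cP : ContinuousOn P (sphere 0 |r|) := fun η hη => by
      refine (hPc η ?_).continuousWithinAt
      rintro rfl
      rw [hrabs, mem_sphere_zero_iff_norm] at hη
      linarith
    have bound : ∀ η ∈ sphere (0 : ℂ) |r|, |P η - P 1| * U η ≤ ε * U η + ε := by
      intro η hη
      rw [hrabs, mem_sphere_zero_iff_norm] at hη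
      have hUη : 0 < U η := hpos η (mem_ball_zero_iff.2 (by linarith))
      by_cases hd : ‖η - 1‖ < δ
      · have := hδP (show dist η 1 < δ by rwa [dist_eq_norm])
        rw [Real.dist_eq] at this
        nlinarith
      · have h1 := hsmall η (by linarith) (by linarith) (not_lt.1 hd)
        have h2 := hPM η (by linarith) (by linarith)
        have h3 : |P η - P 1| ≤ M := abs_sub_le_iff.2 ⟨by linarith, by linarith⟩
        have h4 : |P η - P 1| * U η ≤ M * (ε / M) := mul_le_mul h3 h1.le hUη.le hMpos.le
        rw [mul_div_cancel₀ _ hMpos.ne'] at h4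
        nlinarith
    have avg : ∀ a b : ℝ, Real.circleAverage (fun η => a * U η + b) 0 r = a * U 0 + b := by
      intro a b
      rw [Real.circleAverage_fun_add (f₁ := fun η => a * U η) (f₂ := fun _ => b)
        (cU.const_smul a).circleIntegrable' continuousOn_const.circleIntegrable',
        Real.circleAverage_const]
      have := Real.circleAverage_fun_smul (f := U) (c := 0) (R := r) (a := a)
      simp only [smul_eq_mul] at this
      rw [this, e2]
    have cPU : CircleIntegrable (P • U) 0 r := (cP.smul cU).circleIntegrable'
    have cab : ∀ a b : ℝ, CircleIntegrable (fun η => a * U η + b) 0 r := fun a b =>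
      ((cU.const_smul a).add continuousOn_const).circleIntegrable'
    have up := Real.circleAverage_mono cPU (cab (P 1 + ε) ε) (fun η hη => by
      have h1 := bound η hη
      have h2 : (P η - P 1) * U η ≤ |P η - P 1| * U η := by
        rw [hrabs, mem_sphere_zero_iff_norm] at hη
        exact mul_le_mul_of_nonneg_right (le_abs_self _)
          (hpos η (mem_ball_zero_iff.2 (by linarith))).le
      simp only [Pi.smul_apply', smul_eq_mul]
      linarith)
    have lo := Real.circleAverage_mono (cab (P 1 - ε) (-ε)) cPU (fun η hη => by
      have h1 := bound η hη
      have h2 : -((P η - P 1) * U η) ≤ |P η - P 1| * U η := by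
        rw [hrabs, mem_sphere_zero_iff_norm] at hη
        rw [← neg_mul]
        exact mul_le_mul_of_nonneg_right (neg_le_abs _)
          (hpos η (mem_ball_zero_iff.2 (by linarith))).le
      simp only [Pi.smul_apply', smul_eq_mul]
      linarith)
    rw [avg, e1] at up lo
    exact abs_sub_le_iff.2 ⟨by linarith, by linarith⟩
  have h0 : |U ζ - P 1 * U 0| ≤ 0 := by
    refine le_of_forall_pos_le_add fun ε hε => ?_
    have := key (ε / (U 0 + 1)) (by positivity)
    rw [div_mul_cancel₀ _ (by positivity)] at this
    linarith
  exact sub_eq_zero.1 (abs_nonpos_iff.1 h0)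

/-- Harmonicity is preserved by composition with a holomorphic map. -/
lemma harmonicAt_comp {u : ℂ → ℝ} {G : ℂ → ℂ} {ζ : ℂ}
    (hu : InnerProductSpace.HarmonicAt u (G ζ)) (hG : AnalyticAt ℂ G ζ) :
    InnerProductSpace.HarmonicAt (fun η => u (G η)) ζ := by
  obtain ⟨r, hr, hb⟩ := Metric.eventually_nhds_iff_ball.1 hu.eventually
  obtain ⟨g, hg, hgu⟩ := InnerProductSpace.HarmonicOnNhd.exists_analyticOnNhd_ball_re_eq hb
  have h1 : AnalyticAt ℂ (fun η => g (G η)) ζ :=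
    AnalyticAt.fun_comp (hg _ (mem_ball_self hr)) hG
  refine (InnerProductSpace.harmonicAt_congr_nhds ?_).1 h1.harmonicAt_re
  filter_upwards [hG.continuousAt.preimage_mem_nhds (ball_mem_nhds _ hr)] with η hη
  exact hgu hη

lemma harmonicAt_of_iteratedFDerivWithin {Ω : Set ℂ} (hΩ : IsOpen Ω) {u : ℂ → ℝ}
    (hu : ContDiffOn ℝ (⊤ : ℕ∞) u Ω)
    (hharm : ∀ z ∈ Ω,
      iteratedFDerivWithin ℝ 2 u Ω z ![(1 : ℂ), (1 : ℂ)]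
      + iteratedFDerivWithin ℝ 2 u Ω z ![Complex.I, Complex.I] = 0) {z : ℂ} (hz : z ∈ Ω) :
    InnerProductSpace.HarmonicAt u z := by
  refine ⟨(hu.contDiffAt (hΩ.mem_nhds hz)).of_le ENat.LEInfty.out, ?_⟩
  filter_upwards [hΩ.mem_nhds hz] with w hw
  rw [InnerProductSpace.laplacian_eq_iteratedFDeriv_complexPlane]
  have := hharm w hw
  rwa [iteratedFDerivWithin_of_isOpen 2 hΩ hw] at this

/-! ### Uniqueness of the Martin function -/

/-- If the domain is not the whole half-plane, its part to the left of a vertical line is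
bounded: a point high above an omitted point would span it together with the axis. -/
lemma IsAxialDomain.exists_im_bound {Ω : Set ℂ} (hΩ : IsAxialDomain Ω) (hne : Ω ≠ rhp) {B : ℝ}
    (hB : 0 < B) : ∃ C, ∀ z ∈ Ω, z.re ≤ B → |z.im| ≤ C := by
  obtain ⟨p, hp, hpΩ⟩ := exists_of_ssubset (hΩ.sub.ssubset_of_ne hne)
  have ha : 0 < p.re := hp
  have hb : 0 < |p.im| := by
    rw [abs_pos]
    intro h0
    exact hpΩ (by rw [show p = (p.re : ℂ) by apply Complex.ext <;> simp [h0]]; exact hΩ.axis _ ha)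
  refine ⟨|p.im| + B * |p.im| / p.re, ?_⟩
  have main : ∀ z ∈ Ω, z.re ≤ B → 0 ≤ z.im * p.im → |z.im| ≤ |p.im| + B * |p.im| / p.re := by
    intro z hz hzB hs
    by_contra! hlt
    have hpos : 0 < B * |p.im| / p.re := by positivity
    have hy : |p.im| < |z.im| := by linarith
    have hy0 : 0 < |z.im| := hb.trans hy
    set s : ℝ := |p.im| / |z.im| with hs'
    have hs1 : s < 1 := (div_lt_one hy0).2 hy
    have hs0 : 0 < s := by positivity
    have hsz : s * z.im = p.im := by
      rw [hs', div_mul_eq_mul_div, div_eq_iff hy0.ne']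
      have hzz : z.im ≠ 0 := abs_pos.1 hy0
      have hpp : p.im ≠ 0 := abs_pos.1 hb
      rcases lt_or_gt_of_ne hzz with h1 | h1 <;> rcases lt_or_gt_of_ne hpp with h2 | h2
      · rw [abs_of_neg h1, abs_of_neg h2]; ring
      · nlinarith
      · nlinarith
      · rw [abs_of_pos h1, abs_of_pos h2]
    have hsx : s * z.re < p.re := by
      rw [hs', div_mul_eq_mul_div, div_lt_iff₀ hy0]
      have h1 : B * |p.im| / p.re < |z.im| := by linarith
      rw [div_lt_iff₀ ha] at h1
      nlinarith
    have ht : 0 < (p.re - s * z.re) / (1 - s) := div_pos (by linarith) (by linarith)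
    refine hpΩ ?_
    have := hΩ.convex hz (hΩ.axis _ ht) hs0.le (sub_nonneg.2 hs1.le) (by ring)
    convert this using 1
    have h1s : 1 - s ≠ 0 := by linarith
    apply Complex.ext
    · simp only [Complex.add_re, Complex.real_smul, Complex.re_ofReal_mul, Complex.ofReal_re]
      field_simp
      ring
    · simp only [Complex.add_im, Complex.smul_im, Complex.ofReal_im, smul_eq_mul, mul_zero,
        add_zero, hsz]
  intro z hz hzB
  rcases le_total 0 (z.im * p.im) with h | h
  · exact main z hz hzB h
  · have := main (conj z) ((hΩ.symm z).1 hz) (by simpa using hzB) (by simpa using h)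
    simpa using this

namespace IsAxialMap

variable {Ω : Set ℂ} {f F : ℂ → ℂ}

lemma inv_re_le_re_add_one (h : IsAxialMap Ω f F) (hΩ : IsAxialDomain Ω) {w : ℂ} (hw : w ∈ rhp) :
    (F w).re ≤ (F (w + 1)).re := by
  have hmem : ∀ t ∈ Icc (0 : ℝ) 1, w + t ∈ rhp := fun t ht => by
    have : 0 < w.re := hw
    have := ht.1
    simp only [mem_rhp, Complex.add_re, Complex.ofReal_re]
    linarith
  have hd : ∀ t ∈ Icc (0 : ℝ) 1,
      HasDerivAt (fun s : ℝ => (F (w + s)).re) (deriv F (w + t)).re t := fun t ht => by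
    have h1 : HasDerivAt (fun z : ℂ => F (w + z)) (deriv F (w + t)) (t : ℂ) :=
      (h.diff_inv.differentiableAt (isOpen_rhp.mem_nhds (hmem t ht))).hasDerivAt.comp_const_add
        w (t : ℂ)
    exact h1.real_of_complex
  have hm : MonotoneOn (fun s : ℝ => (F (w + s)).re) (Icc 0 1) := by
    refine monotoneOn_of_deriv_nonneg (convex_Icc 0 1)
      (fun t ht => (hd t ht).continuousAt.continuousWithinAt)
      (fun t ht => (hd t (interior_subset ht)).differentiableAt.differentiableWithinAt)
      (fun t ht => ?_)
    rw [(hd t (interior_subset ht)).deriv]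
    exact (h.deriv_inv_re_pos hΩ (hmem t (interior_subset ht))).le
  simpa using hm (left_mem_Icc.2 zero_le_one) (right_mem_Icc.2 zero_le_one) zero_le_one

/-- The boundary values of `u ∘ F` vanish, locally uniformly along the imaginary axis. -/
lemma exists_lt_of_re_lt (h : IsAxialMap Ω f F) (hΩ : IsAxialDomain Ω) (hne : Ω ≠ rhp)
    {u : ℂ → ℝ} (hcont : ContinuousOn u (closure Ω)) (hzero : ∀ z ∈ frontier Ω, u z = 0)
    (K : ℝ) {ε : ℝ} (hε : 0 < ε) :
    ∃ m > 0, ∀ w ∈ rhp, ‖w‖ ≤ K → w.re < m → u (F w) < ε := by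
  have hT : IsCompact (closedBall (0 : ℂ) (K + 1) ∩ {w | 1 ≤ w.re}) :=
    (isCompact_closedBall _ _).inter_right (isClosed_le continuous_const Complex.continuous_re)
  have hTs : closedBall (0 : ℂ) (K + 1) ∩ {w | 1 ≤ w.re} ⊆ rhp := fun w hw =>
    show 0 < w.re from lt_of_lt_of_le one_pos hw.2
  obtain ⟨B', hB'⟩ := (hT.bddAbove_image
    (f := fun w => (F w).re) (Complex.continuous_re.comp_continuousOn
      (h.diff_inv.continuousOn.mono hTs)))
  set B : ℝ := max B' 1 with hBdef
  have hB0 : 0 < B := lt_of_lt_of_le one_pos (le_max_right _ _)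
  have hFB : ∀ w ∈ rhp, ‖w‖ ≤ K → (F w).re ≤ B := fun w hw hK => by
    refine (h.inv_re_le_re_add_one hΩ hw).trans ((hB' ⟨w + 1, ⟨?_, ?_⟩, rfl⟩).trans (le_max_left _ _))
    · rw [mem_closedBall_zero_iff]
      exact (norm_add_le _ _).trans (by simpa using hK)
    · have : 0 < w.re := hw
      simp only [mem_ofPred_eq, Complex.add_re, Complex.one_re]
      linarith
  obtain ⟨C, hC⟩ := hΩ.exists_im_bound hne (show 0 < B + 1 by linarith)
  have hbd : Bornology.IsBounded (Ω ∩ {z | z.re < B + 1}) := by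
    refine (isBounded_iff_forall_norm_le).2 ⟨(B + 1) + C, fun z hz => ?_⟩
    refine (Complex.norm_le_abs_re_add_abs_im z).trans (add_le_add ?_ (hC z hz.1 (le_of_lt hz.2)))
    rw [abs_of_pos (hΩ.sub hz.1)]
    exact le_of_lt hz.2
  set S : Set ℂ := (closure Ω ∩ {z | z.re ≤ B}) ∩ (closure Ω ∩ u ⁻¹' Ici ε) with hS
  have hScpt : IsCompact S := by
    refine Metric.isCompact_of_isClosed_isBounded ?_ ?_
    · exact (isClosed_closure.inter (isClosed_le Complex.continuous_re continuous_const)).inter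
        (hcont.preimage_isClosed_of_isClosed isClosed_closure isClosed_Ici)
    · refine hbd.closure.subset fun z hz => ?_
      have ho : IsOpen {z : ℂ | z.re < B + 1} :=
        isOpen_lt Complex.continuous_re continuous_const
      have hlt : z.re < B + 1 := lt_of_le_of_lt hz.1.2 (lt_add_one B)
      exact ho.closure_inter ⟨hz.1.1, hlt⟩
  have hSΩ : S ⊆ Ω := fun z hz => by
    by_contra hzΩ
    have hfr : z ∈ frontier Ω := by
      rw [hΩ.isOpen.frontier_eq]
      exact ⟨hz.2.1, hzΩ⟩
    have h1 := hzero z hfr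
    have h2 : ε ≤ u z := hz.2.2
    linarith
  obtain ⟨m, hm, hmS⟩ := hScpt.exists_forall_le' (f := fun z => (f z).re)
    (Complex.continuous_re.comp_continuousOn (h.diff.continuousOn.mono hSΩ)) (a := 0)
    (fun z hz => h.maps (hSΩ hz))
  refine ⟨m, hm, fun w hw hK hwm => ?_⟩
  by_contra! hge
  have hcl := subset_closure (h.maps_inv hw)
  have := hmS (F w) ⟨⟨hcl, hFB w hw hK⟩, hcl, hge⟩
  simp only [h.right_inv hw] at this
  linarith

/-- Uniqueness of the Martin function: it is a multiple of the real part of the conformal map. -/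
lemma eq_mul_re (h : IsAxialMap Ω f F) (hΩ : IsAxialDomain Ω) (hne : Ω ≠ rhp)
    {u : ℂ → ℝ} (hpos : ∀ z ∈ Ω, 0 < u z)
    (hu : ∀ z ∈ Ω, InnerProductSpace.HarmonicAt u z)
    (hcont : ContinuousOn u (closure Ω)) (hzero : ∀ z ∈ frontier Ω, u z = 0) {z : ℂ}
    (hz : z ∈ Ω) : u z = u 1 * (f z).re := by
  set c : ℂ → ℂ := fun ζ => (1 + ζ) / (1 - ζ) with hc
  have hcm : ∀ ζ ∈ ball (0 : ℂ) 1, c ζ ∈ rhp := fun ζ hζ => re_cayley_pos hζ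
  have hcd : DifferentiableOn ℂ c (ball 0 1) := fun ζ hζ => by
    have := one_sub_ne_zero_of_mem_ball hζ
    apply DifferentiableAt.differentiableWithinAt
    simp only [hc]
    fun_prop (disch := assumption)
  have hGd : DifferentiableOn ℂ (fun ζ => F (c ζ)) (ball 0 1) := h.diff_inv.comp hcd hcm
  have hw : f z ∈ rhp := h.maps hz
  set ζ : ℂ := (f z - 1) / (f z + 1) with hζ
  have hζb : ζ ∈ ball (0 : ℂ) 1 := mem_ball_of_mem_rhp hw
  have hcζ : c ζ = f z := by
    have h1 := add_one_ne_zero_of_mem_rhp hw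
    have h2 := one_sub_ne_zero_of_mem_ball hζb
    simp only [hc]
    rw [div_eq_iff h2, hζ]
    field_simp
    ring
  have key := eq_poisson_of_tendsto_zero (U := fun ζ => u (F (c ζ)))
    (fun η hη => harmonicAt_comp (hu _ (h.maps_inv (hcm η hη)))
      (hGd.analyticAt (isOpen_ball.mem_nhds hη)))
    (fun η hη => hpos _ (h.maps_inv (hcm η hη))) ?_ hζb
  · have h0 : F (c 0) = 1 := by
      have : F (f 1) = 1 := h.left_inv (by exact_mod_cast hΩ.axis 1 one_pos)
      rw [h.one] at this
      simpa [hc] using this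
    rw [← re_cayley] at key
    change u (F (c ζ)) = (c ζ).re * u (F (c 0)) at key
    rw [hcζ, h.left_inv hz, h0, mul_comm] at key
    exact key
  · intro δ hδ ε hε
    obtain ⟨m, hm, hsmall⟩ := h.exists_lt_of_re_lt hΩ hne hcont hzero (2 / δ) hε
    refine ⟨1 - m * δ ^ 2 / 2, by have : 0 < m * δ ^ 2 := by positivity
                                  linarith, fun η h1 h2 h3 => ?_⟩
    have hηb : η ∈ ball (0 : ℂ) 1 := mem_ball_zero_iff.2 h2
    rw [norm_sub_rev] at h3
    refine hsmall _ (hcm η hηb) ?_ ?_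
    · simp only [hc, norm_div]
      gcongr
      refine (norm_add_le _ _).trans ?_
      rw [norm_one]
      linarith
    · simp only [hc]
      rw [re_cayley, div_lt_iff₀ (pow_pos (hδ.trans_le h3) 2)]
      have h4 : δ ^ 2 ≤ ‖1 - η‖ ^ 2 := by gcongr
      have h5 := norm_nonneg η
      have h6 : m * δ ^ 2 ≤ m * ‖1 - η‖ ^ 2 := by gcongr
      nlinarith

end IsAxialMap

/-! ### The Hessian quadratic form -/

namespace IsAxialMap

variable {Ω : Set ℂ} {f F : ℂ → ℂ}

/-- Differentiating `f' (F w) * F' w = 1` exchanges the roles of `f` and its inverse `F`. -/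
lemma deriv_deriv_div (h : IsAxialMap Ω f F) (hΩ : IsAxialDomain Ω) {z : ℂ} (hz : z ∈ Ω) :
    deriv (deriv F) (f z) / deriv F (f z) = -(deriv (deriv f) z / deriv f z ^ 2) := by
  have hw : f z ∈ rhp := h.maps hz
  have h1 : HasDerivAt (fun w => deriv f (F w) * deriv F w)
      (deriv (deriv f) (F (f z)) * deriv F (f z) * deriv F (f z)
        + deriv f (F (f z)) * deriv (deriv F) (f z)) (f z) := by
    have e1 : HasDerivAt (deriv f) (deriv (deriv f) (F (f z))) (F (f z)) :=
      ((h.diff.deriv hΩ.isOpen).differentiableAt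
        (hΩ.isOpen.mem_nhds (h.maps_inv hw))).hasDerivAt
    have e2 : HasDerivAt F (deriv F (f z)) (f z) := (h.diffAt_inv hw).hasDerivAt
    have e3 : HasDerivAt (deriv F) (deriv (deriv F) (f z)) (f z) :=
      ((h.diff_inv.deriv isOpen_rhp).differentiableAt (isOpen_rhp.mem_nhds hw)).hasDerivAt
    exact (e1.comp (f z) e2).mul e3
  have h2 : (fun w => deriv f (F w) * deriv F w) =ᶠ[𝓝 (f z)] fun _ => 1 := by
    filter_upwards [isOpen_rhp.mem_nhds hw] with w hw'
    exact h.deriv_mul hΩ hw'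
  have h3 := h1.unique ((hasDerivAt_const (f z) (1 : ℂ)).congr_of_eventuallyEq h2)
  have h4 := h.deriv_mul hΩ hw
  rw [h.left_inv hz] at h3 h4
  have h5 : deriv f z ≠ 0 := left_ne_zero_of_mul_eq_one h4
  have h6 : deriv F (f z) = (deriv f z)⁻¹ := eq_inv_of_mul_eq_one_right h4
  rw [h6] at h3 ⊢
  field_simp at h3 ⊢
  linear_combination h3

end IsAxialMap

lemma hasFDerivAt_mul_re {f : ℂ → ℂ} {a : ℝ} {z c : ℂ} (hf : HasDerivAt f c z) :
    HasFDerivAt (fun w => a * (f w).re)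
      ((ContinuousLinearMap.compL ℝ ℂ ℂ ℝ (a • reCLM)).comp (ContinuousLinearMap.mul ℝ ℂ) c) z := by
  have h1 : HasFDerivAt f (ContinuousLinearMap.mul ℝ ℂ c) z := by
    refine (hf.hasFDerivAt.restrictScalars ℝ).congr_fderiv ?_
    ext v; simp [mul_comm]
  exact (a • reCLM).hasFDerivAt.comp z h1

/-- First derivatives of a real multiple of the real part of a holomorphic function. -/
lemma fderivWithin_mul_re {Ω : Set ℂ} (hΩ : IsOpen Ω) {f : ℂ → ℂ} (hf : DifferentiableOn ℂ f Ω)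
    {u : ℂ → ℝ} {a : ℝ} (hu : ∀ z ∈ Ω, u z = a * (f z).re) {z : ℂ} (hz : z ∈ Ω) (v : ℂ) :
    fderivWithin ℝ u Ω z v = a * (deriv f z * v).re := by
  have h1 : u =ᶠ[𝓝 z] fun w => a * (f w).re := by
    filter_upwards [hΩ.mem_nhds hz] with w hw using hu w hw
  rw [fderivWithin_of_isOpen hΩ hz, h1.fderiv_eq, (hasFDerivAt_mul_re
    (hf.differentiableAt (hΩ.mem_nhds hz)).hasDerivAt).fderiv]
  simp

/-- The Hessian quadratic form of a real multiple of the real part of a holomorphic function. -/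
lemma iteratedFDerivWithin_mul_re {Ω : Set ℂ} (hΩ : IsOpen Ω) {f : ℂ → ℂ}
    (hf : DifferentiableOn ℂ f Ω) {u : ℂ → ℝ} {a : ℝ} (hu : ∀ z ∈ Ω, u z = a * (f z).re) {z : ℂ}
    (hz : z ∈ Ω) (v : ℂ) :
    iteratedFDerivWithin ℝ 2 u Ω z ![v, v] = a * (deriv (deriv f) z * v * v).re := by
  set L : ℂ →L[ℝ] ℂ →L[ℝ] ℝ :=
    (ContinuousLinearMap.compL ℝ ℂ ℂ ℝ (a • reCLM)).comp (ContinuousLinearMap.mul ℝ ℂ) with hL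
  have h1 : fderiv ℝ u =ᶠ[𝓝 z] fun w => L (deriv f w) := by
    filter_upwards [hΩ.mem_nhds hz] with w hw
    have h1 : u =ᶠ[𝓝 w] fun w => a * (f w).re := by
      filter_upwards [hΩ.mem_nhds hw] with w' hw' using hu w' hw'
    rw [h1.fderiv_eq]
    exact (hasFDerivAt_mul_re (hf.differentiableAt (hΩ.mem_nhds hw)).hasDerivAt).fderiv
  have h2 : HasFDerivAt (deriv f) (ContinuousLinearMap.mul ℝ ℂ (deriv (deriv f) z)) z := by
    refine ((((hf.deriv hΩ).differentiableAt
      (hΩ.mem_nhds hz)).hasDerivAt).hasFDerivAt.restrictScalars ℝ).congr_fderiv ?_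
    ext v; simp [mul_comm]
  have h3 := L.hasFDerivAt.comp z h2
  rw [iteratedFDerivWithin_of_isOpen 2 hΩ hz, iteratedFDeriv_two_apply, h1.fderiv_eq]
  have h4 := h3.fderiv
  simp only [Function.comp_def] at h4
  rw [h4]
  simp [hL]

/-- For a smooth Martin function on a convex domain in the right
half plane, symmetric about the positive real axis which it contains, and not
equal to the right half plane, every superlevel set is strictly convex: the
Hessian quadratic form is strictly negative in the tangential direction
`T = (u_y, -u_x)` at every point of every level set. -/
theorem stmt_19 (Ω : Set ℂ) (hΩo : IsOpen Ω) (hΩconv : Convex ℝ Ω)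
    (hsub : Ω ⊆ {z : ℂ | 0 < z.re})
    (haxis : ∀ x : ℝ, 0 < x → (x : ℂ) ∈ Ω)
    (hsym : ∀ z : ℂ, z ∈ Ω ↔ (starRingEnd ℂ) z ∈ Ω)
    (hne : Ω ≠ {z : ℂ | 0 < z.re})
    (u : ℂ → ℝ)
    (hpos : ∀ z ∈ Ω, 0 < u z)
    (husmooth : ContDiffOn ℝ (⊤ : ℕ∞) u Ω)
    (hharm : ∀ z ∈ Ω,
      iteratedFDerivWithin ℝ 2 u Ω z ![(1 : ℂ), (1 : ℂ)]
      + iteratedFDerivWithin ℝ 2 u Ω z ![Complex.I, Complex.I] = 0)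
    (hcont : ContinuousOn u (closure Ω))
    (hzero : ∀ z ∈ frontier Ω, u z = 0)
    (c : ℝ) (hc : 0 < c) (z : ℂ) (hz : z ∈ Ω) (huz : u z = c) :
    iteratedFDerivWithin ℝ 2 u Ω z
      ![(fderivWithin ℝ u Ω z Complex.I : ℝ) - (fderivWithin ℝ u Ω z 1 : ℝ) * Complex.I,
        (fderivWithin ℝ u Ω z Complex.I : ℝ) - (fderivWithin ℝ u Ω z 1 : ℝ) * Complex.I] < 0 := by
  have hΩ : IsAxialDomain Ω := ⟨hΩo, hΩconv, hsub, haxis, hsym⟩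
  obtain ⟨f, F, h⟩ := exists_axialMap hΩo hΩconv hsub haxis hsym
  have ha : 0 < u 1 := hpos 1 (by exact_mod_cast haxis 1 one_pos)
  have hu : ∀ z ∈ Ω, u z = u 1 * (f z).re := fun z hz =>
    h.eq_mul_re hΩ hne hpos (fun z hz => harmonicAt_of_iteratedFDerivWithin hΩo husmooth hharm hz)
      hcont hzero hz
  have hw : f z ∈ rhp := h.maps hz
  have hneg := h.re_div_neg hΩ hne hw
  rw [h.deriv_deriv_div hΩ hz] at hneg
  have hf' : deriv f z ≠ 0 := by
    have := h.deriv_mul hΩ hw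
    rw [h.left_inv hz] at this
    exact left_ne_zero_of_mul_eq_one this
  rw [iteratedFDerivWithin_mul_re hΩo h.diff hu hz, fderivWithin_mul_re hΩo h.diff hu hz,
    fderivWithin_mul_re hΩo h.diff hu hz]
  set p : ℂ := deriv f z with hp
  set q : ℂ := deriv (deriv f) z with hq
  -- the tangent vector is `-a i (conj p)` with `a = u 1`, so its square is `-a ^ 2 (conj p) ^ 2`
  have hT : ((u 1 * (p * I).re : ℝ) : ℂ) - ((u 1 * (p * 1).re : ℝ) : ℂ) * I
      = -((u 1 : ℂ) * I * conj p) := by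
    apply Complex.ext <;> simp
  have hpp : conj p = (normSq p : ℂ) / p := by
    rw [eq_div_iff hf', mul_comm, Complex.mul_conj]
  have hval : q * -((u 1 : ℂ) * I * conj p) * -((u 1 : ℂ) * I * conj p)
      = ((u 1 ^ 2 * normSq p ^ 2 : ℝ) : ℂ) * -(q / p ^ 2) := by
    rw [hpp]
    field_simp
    push_cast
    linear_combination q * (u 1 : ℂ) ^ 2 * (normSq p : ℂ) ^ 2 * I_sq
  rw [hT, hval, Complex.re_ofReal_mul]
  have hn : 0 < normSq p := normSq_pos.2 hf'
  exact mul_neg_of_pos_of_neg ha (mul_neg_of_pos_of_neg (by positivity) hneg)
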